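/- arXiv:2311.02547 — 4 statements merged into one kernel-verified Lean document; each statement's English description precedes it below -/
import Mathlib

section
/- Let d, e ≥ 1 be integers, μ ∈ {1,−1}^d and ν ∈ {1,−1}^e. Then for every shuffle ξ ∈ {1,−1}^{d+e} of p(μ) and p(ν), one has sgn_T(q(ξ)) = sgn_T(μ)·sgn_T(ν). -/
/-- `p(μ) = (μ₁, μ₁μ₂, …, μ₁μ₂⋯μ_d)`, the partial-products map. -/
def pSigns {d : ℕ} (μ : Fin d → ℤ) : Fin d → ℤ :=
  fun i => ∏ j ∈ Finset.Iic i, μ j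

/-- `q(μ) = (μ₁, μ₂μ₁, μ₃μ₂, …, μ_dμ_{d−1})`, the consecutive-products map. -/
def qSigns {d : ℕ} (μ : Fin d → ℤ) : Fin d → ℤ :=
  fun i => if (i : ℕ) = 0 then μ i
    else μ i * μ ⟨(i : ℕ) - 1, Nat.lt_of_le_of_lt (Nat.sub_le _ _) i.isLt⟩

/-- The `T`-sign `sgn_T(μ) = ∏_{1 ≤ j ≤ d, j ≡ d (mod 2)} μ_j` (here `i : Fin d`
corresponds to `j = i + 1`). -/
def sgnT {d : ℕ} (μ : Fin d → ℤ) : ℤ :=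
  ∏ i ∈ Finset.univ.filter (fun i : Fin d => ((i : ℕ) + 1) % 2 = d % 2), μ i

/-- `ξ` is a shuffle of `α` and `β`: there are strictly increasing maps with disjoint
ranges along which `ξ` restricts to `α` and `β`. -/
def IsShuffle {d e : ℕ} (α : Fin d → ℤ) (β : Fin e → ℤ) (ξ : Fin (d + e) → ℤ) : Prop :=
  ∃ (f : Fin d → Fin (d + e)) (g : Fin e → Fin (d + e)),
    StrictMono f ∧ StrictMono g ∧ (∀ i j, f i ≠ g j) ∧
    (∀ i, ξ (f i) = α i) ∧ (∀ j, ξ (g j) = β j)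

theorem sgnT_step {n : ℕ} (μ : Fin (n + 2) → ℤ) :
    sgnT μ = sgnT (fun i : Fin n => μ i.castSucc.castSucc) * μ (Fin.last (n + 1)) := by
  unfold sgnT
  rw [Finset.prod_filter, Finset.prod_filter, Fin.prod_univ_castSucc, Fin.prod_univ_castSucc]
  have h1 : ¬ ((n + 1) % 2 = n % 2) := by omega
  have h2 : (n + 1 + 1) % 2 = n % 2 := by omega
  simp [h1, h2]

theorem pSigns_eq {n : ℕ} (μ : Fin n → ℤ) (i : Fin n) :
    pSigns μ i = ∏ j, if j ≤ i then μ j else 1 := by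
  unfold pSigns
  rw [← Finset.prod_filter]
  congr 1
  ext j
  simp

theorem pSigns_castSucc {n : ℕ} (μ : Fin (n + 1) → ℤ) (i : Fin n) :
    pSigns μ i.castSucc = pSigns (fun i : Fin n => μ i.castSucc) i := by
  rw [pSigns_eq, pSigns_eq, Fin.prod_univ_castSucc]
  have h : ¬ (Fin.last n ≤ i.castSucc) := by
    simp [Fin.le_def]
  simp [h]

theorem pSigns_last {n : ℕ} (μ : Fin (n + 1) → ℤ) :
    pSigns μ (Fin.last n) = ∏ j, μ j := by
  rw [pSigns_eq]
  simp [Fin.le_last]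

theorem sgnT_qSigns : ∀ (n : ℕ) (ξ : Fin n → ℤ), sgnT (qSigns ξ) = ∏ i, ξ i
  | 0, ξ => by simp [sgnT]
  | 1, ξ => by simp [sgnT, qSigns]
  | n + 2, ξ => by
    rw [sgnT_step, Fin.prod_univ_castSucc, Fin.prod_univ_castSucc,
      ← sgnT_qSigns n (fun i => ξ i.castSucc.castSucc)]
    have h : qSigns ξ (Fin.last (n + 1)) = ξ (Fin.last (n + 1)) * ξ (Fin.last n).castSucc := by
      simp only [qSigns, Fin.val_last]
      rfl
    rw [h, mul_assoc, mul_comm (ξ (Fin.last (n + 1)))]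
    rfl

theorem prod_pSigns : ∀ (n : ℕ) (μ : Fin n → ℤ), (∀ i, μ i = 1 ∨ μ i = -1) →
    ∏ i, pSigns μ i = sgnT μ
  | 0, μ, _ => by simp [sgnT]
  | 1, μ, _ => by simp [sgnT, pSigns_eq]
  | n + 2, μ, hμ => by
    rw [sgnT_step, Fin.prod_univ_castSucc, Fin.prod_univ_castSucc,
      ← prod_pSigns n (fun i => μ i.castSucc.castSucc) (fun i => hμ _)]
    simp only [pSigns_castSucc, pSigns_last]
    rw [Fin.prod_univ_castSucc (n := n + 1) (f := μ)]
    have h : ∀ i : Fin (n + 1), μ i.castSucc * μ i.castSucc = 1 := by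
      intro i
      rcases hμ i.castSucc with h | h <;> simp [h]
    have h' : (∏ i : Fin (n + 1), μ i.castSucc) * ∏ i : Fin (n + 1), μ i.castSucc = 1 := by
      rw [← Finset.prod_mul_distrib]
      simp [h]
    rw [mul_assoc, ← mul_assoc (∏ i : Fin (n + 1), μ i.castSucc), h', one_mul]

theorem sgnT_of_shuffle (d e : ℕ) (hd : 1 ≤ d) (he : 1 ≤ e)
    (μ : Fin d → ℤ) (ν : Fin e → ℤ)
    (hμ : ∀ i, μ i = 1 ∨ μ i = -1) (hν : ∀ j, ν j = 1 ∨ ν j = -1)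
    (ξ : Fin (d + e) → ℤ) (hξ : IsShuffle (pSigns μ) (pSigns ν) ξ) :
    sgnT (qSigns ξ) = sgnT μ * sgnT ν := by
  obtain ⟨f, g, hf, hg, hfg, hα, hβ⟩ := hξ
  have hinj : Function.Injective (Sum.elim f g) :=
    hf.injective.sumElim hg.injective hfg
  have hbij : Function.Bijective (Sum.elim f g) :=
    (Fintype.bijective_iff_injective_and_card _).2 ⟨hinj, by simp⟩
  rw [sgnT_qSigns, ← hbij.prod_comp ξ, Fintype.prod_sum_type, ← prod_pSigns d μ hμ,
    ← prod_pSigns e ν hν]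
  simp [hα, hβ]
end

section
/- Let u ≥ 3 and d ≥ 0 be integers and q = u−1. Then Σ_{a+b=u, a≥2, b≥1} ζ(a,b̄,1̄,1_d) = ζ(q̄,1,1̄,1_d) − ζ(q̄,1̄,1,1_d) + ζ(ū,1̄,1_d) + ζ(q̄,2̄,1_d) + Σ_{j=1}^{d} ζ(q̄,1̄,1_{j−1},2,1_{d−j}). Here ζ(a,b̄,1̄,1_d) = ζ((a,b,1,1_d);(1,−1,−1,1,…,1)), ζ(q̄,1,1̄,1_d) = ζ((q,1,1,1_d);(−1,1,−1,1,…,1)), ζ(q̄,1̄,1,1_d) = ζ((q,1,1,1_d);(−1,−1,1,1,…,1)), ζ(ū,1̄,1_d) = ζ((u,1,1_d);(−1,−1,1,…,1)), ζ(q̄,2̄,1_d) = ζ((q,2,1_d);(−1,−1,1,…,1)), and ζ(q̄,1̄,1_{j−1},2,1_{d−j}) = ζ((q,1,1_{j−1},2,1_{d−j});(−1,−1,1,…,1)). -/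
/-- The Euler sum `ζ(s₁,…,s_d; μ₁,…,μ_d)
  = Σ_{k₁>⋯>k_d≥1} μ₁^{k₁}⋯μ_d^{k_d} / (k₁^{s₁}⋯k_d^{s_d})`. -/
noncomputable def eulerSum {d : ℕ} (s : Fin d → ℕ) (μ : Fin d → ℤ) : ℝ :=
  ∑' k : {k : Fin d → ℕ // StrictAnti k ∧ ∀ i, 0 < k i},
    ∏ i, ((μ i : ℝ) ^ k.1 i / (k.1 i : ℝ) ^ s i)

/-- Truncated nested sum over `n > k₁ > ⋯ > k_d`. -/
noncomputable def truncZ : (d : ℕ) → (Fin d → ℕ) → (Fin d → ℤ) → ℕ → ℝ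
  | 0, _, _, _ => 1
  | d + 1, s, μ, n => ∑ k ∈ Finset.range n,
      ((μ 0 : ℝ) ^ k / (k : ℝ) ^ s 0) * truncZ d (fun i => s i.succ) (fun i => μ i.succ) k

/-- Truncated sum with all arguments equal to one. -/
noncomputable def truncE : ℕ → ℕ → ℝ
  | 0, _ => 1
  | d + 1, n => ∑ k ∈ Finset.range n, (1 / (k : ℝ)) * truncE d k

theorem truncE_nonneg (d n : ℕ) : 0 ≤ truncE d n := by
  induction d generalizing n with
  | zero => simp [truncE]
  | succ d ih =>
    rw [truncE]
    exact Finset.sum_nonneg fun k _ => mul_nonneg (by positivity) (ih k)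

theorem truncE_mono (d : ℕ) : Monotone (truncE d) := by
  cases d with
  | zero => intro a b _; simp [truncE]
  | succ d =>
    intro a b h
    simp only [truncE]
    apply Finset.sum_le_sum_of_subset_of_nonneg
    · simpa using h
    · intro i _ _
      exact mul_nonneg (by positivity) (truncE_nonneg d i)

theorem truncE_one_le (n : ℕ) : truncE 1 n ≤ 1 + Real.log n := by
  simp only [truncE, mul_one]
  rcases n with _ | n
  · simp
  · rw [Finset.sum_range_succ']
    have h := harmonic_le_one_add_log n
    simp only [harmonic, Rat.cast_sum, Rat.cast_inv, Rat.cast_natCast] at h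
    have h2 : Real.log n ≤ Real.log ((n + 1 : ℕ) : ℝ) := by
      rcases Nat.eq_zero_or_pos n with h0 | h0
      · subst h0; simp
      · exact Real.log_le_log (by exact_mod_cast h0) (by push_cast; linarith)
    simp only [one_div]
    simp only [Nat.cast_zero, inv_zero, add_zero]
    linarith

theorem truncE_succ_le (d n : ℕ) : truncE (d + 1) n ≤ truncE 1 n * truncE d n := by
  simp only [truncE, mul_one]
  rw [Finset.sum_mul]
  apply Finset.sum_le_sum
  intro i hi
  exact mul_le_mul_of_nonneg_left (truncE_mono d (Finset.mem_range.1 hi).le) (by positivity)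

theorem truncE_le (d n : ℕ) : truncE d n ≤ (1 + Real.log n) ^ d := by
  induction d with
  | zero => simp [truncE]
  | succ d ih =>
    refine (truncE_succ_le d n).trans ?_
    rw [pow_succ']
    exact mul_le_mul (truncE_one_le n) ih (truncE_nonneg d n)
      ((truncE_nonneg 1 n).trans (truncE_one_le n))

theorem summable_log_pow (d : ℕ) :
    Summable fun n : ℕ => (1 + Real.log n) ^ d / (n : ℝ) ^ 2 := by
  have h1 : (fun x : ℝ => (1 + Real.log x)) =O[Filter.atTop] Real.log := by
    apply Asymptotics.IsBigO.add _ (Asymptotics.isBigO_refl _ _)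
    exact (Real.isLittleO_const_log_atTop).isBigO
  have h2 : (fun x : ℝ => (1 + Real.log x) ^ d) =O[Filter.atTop] fun x : ℝ => x ^ (1/2 : ℝ) := by
    refine (h1.pow d).trans ?_
    have := (isLittleO_log_rpow_rpow_atTop (d : ℝ) (show (0:ℝ) < 1/2 by norm_num)).isBigO
    simpa using this
  have h3 : (fun x : ℝ => (1 + Real.log x) ^ d / x ^ 2) =O[Filter.atTop]
      fun x : ℝ => x ^ (-(3/2) : ℝ) := by
    have := h2.mul (Asymptotics.isBigO_refl (fun x : ℝ => x ^ (-2 : ℝ)) Filter.atTop)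
    refine (this.congr' ?_ ?_)
    · filter_upwards [Filter.eventually_gt_atTop 0] with x hx
      rw [Real.rpow_neg hx.le, div_eq_mul_inv]; norm_num
    · filter_upwards [Filter.eventually_gt_atTop 0] with x hx
      rw [← Real.rpow_add hx]; norm_num
  have h4 := h3.comp_tendsto tendsto_natCast_atTop_atTop
  exact summable_of_isBigO_nat (Real.summable_nat_rpow.2 (by norm_num)) h4

theorem summable_truncE (d s e : ℕ) (hs : 2 ≤ s) :
    Summable fun n : ℕ => (1 / (n : ℝ) ^ s) * ((1 + Real.log n) ^ e * truncE d n) := by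
  refine Summable.of_nonneg_of_le ?_ ?_ (summable_log_pow (e + d))
  · intro n
    have h0 : 0 ≤ 1 + Real.log n := (truncE_nonneg 1 n).trans (truncE_one_le n)
    have := truncE_nonneg d n
    positivity
  · intro n
    have h0 : 0 ≤ 1 + Real.log n := (truncE_nonneg 1 n).trans (truncE_one_le n)
    rw [div_eq_inv_mul ((1 + Real.log n) ^ (e + d)), pow_add]
    rcases Nat.eq_zero_or_pos n with h | h
    · subst h; simp [show s ≠ 0 by omega]
    · have hn : (1 : ℝ) ≤ n := by exact_mod_cast h
      have h1 : 1 / (n : ℝ) ^ s ≤ ((n : ℝ) ^ 2)⁻¹ := by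
        rw [one_div]
        gcongr
      have h2 := truncE_le d n
      have h3 := truncE_nonneg d n
      exact mul_le_mul h1 (mul_le_mul_of_nonneg_left h2 (by positivity)) (by positivity)
        (by positivity)

theorem truncZ_abs_le (d : ℕ) (s : Fin d → ℕ) (μ : Fin d → ℤ) (hs : ∀ i, 1 ≤ s i)
    (hμ : ∀ i, |(μ i : ℝ)| = 1) (n : ℕ) : |truncZ d s μ n| ≤ truncE d n := by
  induction d generalizing n with
  | zero => simp [truncZ, truncE]
  | succ d ih =>
    simp only [truncZ, truncE]
    refine (Finset.abs_sum_le_sum_abs _ _).trans (Finset.sum_le_sum fun k _ => ?_)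
    rw [abs_mul, abs_div, abs_pow, hμ 0, one_pow]
    refine mul_le_mul ?_ (ih _ _ (fun i => hs _) (fun i => hμ _) k) (abs_nonneg _) (by positivity)
    rcases Nat.eq_zero_or_pos k with h | h
    · subst h; simp [show s 0 ≠ 0 by have := hs 0; omega]
    · have hn : (1 : ℝ) ≤ k := by exact_mod_cast h
      rw [abs_of_nonneg (by positivity)]
      gcongr
      exact le_self_pow₀ hn (by have := hs 0; omega)

theorem hasSum_of_eq_fun {ι : Type*} {f g : ι → ℝ} {a : ℝ} (h : HasSum f a)
    (hfg : ∀ i, g i = f i) : HasSum g a := by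
  rw [show g = f from funext hfg]; exact h

theorem strictAnti_cons {d : ℕ} (a : ℕ) (t : Fin d → ℕ) :
    StrictAnti (Fin.cons a t : Fin (d + 1) → ℕ) ↔ (∀ i, t i < a) ∧ StrictAnti t := by
  constructor
  · intro h
    refine ⟨fun i => ?_, fun i j hij => ?_⟩
    · simpa using h (Fin.succ_pos i)
    · simpa using h (Fin.succ_lt_succ_iff.2 hij)
  · rintro ⟨h1, h2⟩ i j hij
    induction j using Fin.cases with
    | zero => exact absurd hij (Fin.not_lt_zero _)
    | succ j =>
      induction i using Fin.cases with
      | zero => simpa using h1 j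
      | succ i => simpa using h2 (Fin.succ_lt_succ_iff.1 hij)

open Classical in
theorem hasSum_truncZ (d : ℕ) (s : Fin d → ℕ) (μ : Fin d → ℤ) (hs : ∀ i, 1 ≤ s i) (n : ℕ) :
    HasSum (fun t : Fin d → ℕ => if StrictAnti t ∧ (∀ i, 0 < t i) ∧ (∀ i, t i < n) then
      ∏ i, ((μ i : ℝ) ^ t i / (t i : ℝ) ^ s i) else 0) (truncZ d s μ n) := by
  induction d generalizing n with
  | zero =>
    have := hasSum_fintype (fun t : Fin 0 → ℕ =>
      if StrictAnti t ∧ (∀ i, 0 < t i) ∧ (∀ i, t i < n) then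
      ∏ i, ((μ i : ℝ) ^ t i / (t i : ℝ) ^ s i) else 0)
    convert this
    simp [truncZ, StrictAnti]
  | succ d ih =>
    set F := (fun t : Fin (d+1) → ℕ => if StrictAnti t ∧ (∀ i, 0 < t i) ∧ (∀ i, t i < n) then
      ∏ i, ((μ i : ℝ) ^ t i / (t i : ℝ) ^ s i) else 0) with hF
    have hsum : Summable F := by
      apply summable_of_hasFiniteSupport
      refine Set.Finite.subset (Set.Finite.pi' (fun _ : Fin (d+1) => Set.finite_Iio n)) ?_
      intro t ht i
      simp only [hF, Function.mem_support] at ht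
      by_contra hcon
      apply ht
      rw [if_neg]
      rintro ⟨_, _, h⟩
      exact hcon (h i)
    have e1 := (Fin.consEquiv (fun _ : Fin (d+1) => ℕ)).hasSum_iff.2 hsum.hasSum
    have e2 := e1.prod_fiberwise (g := fun k => if k < n then ((μ 0 : ℝ) ^ k / (k : ℝ) ^ s 0) *
      truncZ d (fun i => s i.succ) (fun i => μ i.succ) k else 0) ?_
    · have e3 : HasSum (fun k => if k < n then ((μ 0 : ℝ) ^ k / (k : ℝ) ^ s 0) *
        truncZ d (fun i => s i.succ) (fun i => μ i.succ) k else 0) (truncZ (d+1) s μ n) := by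
        have := hasSum_sum_of_ne_finset_zero (L := .unconditional ℕ) (f := fun k => if k < n then
          ((μ 0 : ℝ) ^ k / (k : ℝ) ^ s 0) *
          truncZ d (fun i => s i.succ) (fun i => μ i.succ) k else 0) (s := Finset.range n) ?_
        · convert this using 1
          rw [truncZ]
          refine Finset.sum_congr rfl fun k hk => ?_
          rw [if_pos (Finset.mem_range.1 hk)]
        · intro k hk
          rw [if_neg (by simpa using hk)]
      rw [e3.unique e2]
      exact hsum.hasSum
    · intro k
      by_cases hk : 0 < k ∧ k < n
      · rw [if_pos hk.2]
        refine hasSum_of_eq_fun ((ih (fun i => s i.succ) (fun i => μ i.succ)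
          (fun i => hs _) k).mul_left ((μ 0 : ℝ) ^ k / (k : ℝ) ^ s 0)) fun t => ?_
        have hc : (StrictAnti (Fin.cons k t : Fin (d+1) → ℕ) ∧
            (∀ i, 0 < (Fin.cons k t : Fin (d+1) → ℕ) i) ∧
            (∀ i, (Fin.cons k t : Fin (d+1) → ℕ) i < n)) ↔
            (StrictAnti t ∧ (∀ i, 0 < t i) ∧ (∀ i, t i < k)) := by
          rw [strictAnti_cons, Fin.forall_fin_succ, Fin.forall_fin_succ]
          simp only [Fin.cons_zero, Fin.cons_succ]
          constructor
          · rintro ⟨⟨h1, h2⟩, ⟨_, h3⟩, _⟩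
            exact ⟨h2, h3, h1⟩
          · rintro ⟨h1, h2, h3⟩
            exact ⟨⟨h3, h1⟩, ⟨hk.1, h2⟩, hk.2, fun i => (h3 i).trans hk.2⟩
        simp only [Function.comp, Fin.consEquiv, Equiv.coe_fn_mk, hF]
        rw [if_congr hc rfl rfl, mul_ite, mul_zero]
        refine if_congr Iff.rfl ?_ rfl
        rw [Fin.prod_univ_succ]
        simp
      · have hz : (if k < n then ((μ 0 : ℝ) ^ k / (k : ℝ) ^ s 0) *
          truncZ d (fun i => s i.succ) (fun i => μ i.succ) k else 0) = 0 := by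
          split_ifs with h
          · have : k = 0 := by omega
            subst this
            have := hs 0
            simp [show s 0 ≠ 0 by omega]
          · rfl
        rw [hz]
        convert hasSum_zero using 1
        funext t
        simp only [Function.comp, Fin.consEquiv, Equiv.coe_fn_mk, hF]
        rw [if_neg]
        rintro ⟨_, h1, h2⟩
        exact hk ⟨by simpa using h1 0, by simpa using h2 0⟩

theorem summable_truncZ (d : ℕ) (s : Fin d → ℕ) (μ : Fin d → ℤ) (hs : ∀ i, 1 ≤ s i)
    (hμ : ∀ i, |(μ i : ℝ)| = 1) (x : ℤ) (hx : |(x : ℝ)| = 1) (r : ℕ) (hr : 2 ≤ r) :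
    Summable fun k : ℕ => ((x : ℝ) ^ k / (k : ℝ) ^ r) * truncZ d s μ k := by
  refine Summable.of_norm_bounded (summable_truncE d r 0 hr) fun k => ?_
  rw [Real.norm_eq_abs, abs_mul, abs_div, abs_pow, hx, one_pow, pow_zero, one_mul,
    abs_of_nonneg (show (0:ℝ) ≤ (k:ℝ)^r by positivity)]
  exact mul_le_mul_of_nonneg_left (truncZ_abs_le d s μ hs hμ k) (by positivity)

open Classical in
theorem eulerSum_eq (d : ℕ) (s : Fin (d+1) → ℕ) (μ : Fin (d+1) → ℤ) (hs : ∀ i, 1 ≤ s i)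
    (hμ : ∀ i, |(μ i : ℝ)| = 1) (hs0 : 2 ≤ s 0) :
    eulerSum s μ = ∑' k : ℕ, ((μ 0 : ℝ) ^ k / (k : ℝ) ^ s 0) *
      truncZ d (fun i => s i.succ) (fun i => μ i.succ) k := by
  have key : ∀ ν : Fin (d+1) → ℤ, ∀ k : ℕ, HasSum (fun t : Fin d → ℕ =>
      if StrictAnti (Fin.cons k t : Fin (d+1) → ℕ) ∧ (∀ i, 0 < (Fin.cons k t : Fin (d+1) → ℕ) i)
      then ∏ i, ((ν i : ℝ) ^ (Fin.cons k t : Fin (d+1) → ℕ) i /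
        ((Fin.cons k t : Fin (d+1) → ℕ) i : ℝ) ^ s i) else 0)
      (((ν 0 : ℝ) ^ k / (k : ℝ) ^ s 0) *
        truncZ d (fun i => s i.succ) (fun i => ν i.succ) k) := by
    intro ν k
    by_cases hk : 0 < k
    · refine hasSum_of_eq_fun ((hasSum_truncZ d (fun i => s i.succ) (fun i => ν i.succ)
        (fun i => hs _) k).mul_left ((ν 0 : ℝ) ^ k / (k : ℝ) ^ s 0)) fun t => ?_
      have hc : (StrictAnti (Fin.cons k t : Fin (d+1) → ℕ) ∧
            (∀ i, 0 < (Fin.cons k t : Fin (d+1) → ℕ) i)) ↔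
            (StrictAnti t ∧ (∀ i, 0 < t i) ∧ (∀ i, t i < k)) := by
          rw [strictAnti_cons, Fin.forall_fin_succ]
          simp only [Fin.cons_zero, Fin.cons_succ]
          tauto
      rw [if_congr hc rfl rfl, mul_ite, mul_zero]
      refine if_congr Iff.rfl ?_ rfl
      rw [Fin.prod_univ_succ]
      simp
    · have : k = 0 := by omega
      subst this
      have := hs 0
      convert hasSum_zero using 1
      · funext t
        rw [if_neg]
        rintro ⟨_, h⟩
        simpa using h 0
      · simp [show s 0 ≠ 0 by omega]
  have hprodabs : ∀ t : Fin (d+1) → ℕ, |∏ i, ((μ i : ℝ) ^ t i / (t i : ℝ) ^ s i)| =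
      ∏ i, ((((1:ℤ)) : ℝ) ^ t i / (t i : ℝ) ^ s i) := by
    intro t
    rw [Finset.abs_prod]
    refine Finset.prod_congr rfl fun i _ => ?_
    rw [abs_div, abs_pow, hμ, abs_of_nonneg (show (0:ℝ) ≤ (t i:ℝ)^(s i) by positivity)]
    simp
  set F : (Fin (d+1) → ℕ) → ℝ := fun t => if StrictAnti t ∧ (∀ i, 0 < t i) then
      ∏ i, ((μ i : ℝ) ^ t i / (t i : ℝ) ^ s i) else 0 with hF
  have hcomp : ∀ k t, (F ∘ (Fin.consEquiv (fun _ : Fin (d+1) => ℕ))) (k, t) =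
      F (Fin.cons k t) := fun k t => rfl
  have hsum : Summable (F ∘ (Fin.consEquiv (fun _ : Fin (d+1) => ℕ))) := by
    rw [← summable_abs_iff]
    have hk1 := key (fun _ => 1)
    have habs : ∀ k t, |F (Fin.cons k t)| =
       if StrictAnti (Fin.cons k t : Fin (d+1) → ℕ) ∧ (∀ i, 0 < (Fin.cons k t : Fin (d+1) → ℕ) i)
      then ∏ i, ((((1:ℤ)) : ℝ) ^ (Fin.cons k t : Fin (d+1) → ℕ) i /
        ((Fin.cons k t : Fin (d+1) → ℕ) i : ℝ) ^ s i) else 0 := by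
      intro k t
      simp only [hF]
      rw [apply_ite abs, abs_zero, hprodabs]
    rw [summable_prod_of_nonneg (fun _ => abs_nonneg _)]
    refine ⟨fun k => ?_, ?_⟩
    · simp only [hcomp, habs]
      exact (hk1 k).summable
    · simp only [hcomp, habs]
      simp only [(hk1 _).tsum_eq]
      exact summable_truncZ d _ _ (fun i => hs _) (by simp) 1 (by simp) _ hs0
  have h1 : eulerSum s μ = ∑' t, F t := by
    rw [eulerSum]
    refine (tsum_subtype {k : Fin (d+1) → ℕ | StrictAnti k ∧ ∀ i, 0 < k i}
      (fun k => ∏ i, ((μ i : ℝ) ^ k i / (k i : ℝ) ^ s i))).trans ?_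
    refine tsum_congr fun t => ?_
    simp only [Set.indicator, hF, Set.mem_ofPred_eq]
  rw [h1, ← (Fin.consEquiv (fun _ : Fin (d+1) => ℕ)).tsum_eq]
  have h2 : HasSum (fun k : ℕ => ((μ 0 : ℝ) ^ k / (k : ℝ) ^ s 0) *
        truncZ d (fun i => s i.succ) (fun i => μ i.succ) k)
        (∑' c : ℕ × (Fin d → ℕ), (F ∘ (Fin.consEquiv (fun _ : Fin (d+1) => ℕ))) c) :=
    HasSum.prod_fiberwise (f := (F ∘ (Fin.consEquiv (fun _ : Fin (d+1) => ℕ)))) hsum.hasSum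
      (fun k => key μ k)
  rw [h2.tsum_eq]
  rfl

/-- Generating function of the coefficients `truncE d l / l`. -/
noncomputable def serL (d : ℕ) : PowerSeries ℝ := PowerSeries.mk fun l => (1 / (l : ℝ)) * truncE d l

/-- The alternating geometric series without constant term. -/
noncomputable def serAlt : PowerSeries ℝ := PowerSeries.mk fun n => if n = 0 then 0 else (-1) ^ n

theorem serL_deriv_succ (d : ℕ) :
    PowerSeries.derivative ℝ (serL (d + 1)) = serL d * PowerSeries.mk (fun _ => (1 : ℝ)) := by
  ext n
  rw [PowerSeries.coeff_derivative, PowerSeries.coeff_mul,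
    Finset.Nat.sum_antidiagonal_eq_sum_range_succ_mk]
  simp only [serL, PowerSeries.coeff_mk, truncE, mul_one]
  have : ((n : ℝ) + 1) ≠ 0 := by positivity
  push_cast
  field_simp

theorem serL_deriv_zero :
    PowerSeries.derivative ℝ (serL 0) = PowerSeries.mk (fun _ => (1 : ℝ)) := by
  ext n
  rw [PowerSeries.coeff_derivative]
  simp only [serL, PowerSeries.coeff_mk, truncE, mul_one]
  have : ((n : ℝ) + 1) ≠ 0 := by positivity
  push_cast
  field_simp

theorem serL_mul (d : ℕ) : serL d * serL 0 = ((d : PowerSeries ℝ) + 2) * serL (d + 1) := by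
  have hcast : ∀ d : ℕ, PowerSeries.derivative ℝ ((d : PowerSeries ℝ) + 2) = 0 := by
    intro d
    have : ((d : PowerSeries ℝ) + 2) = ((d + 2 : ℕ) : PowerSeries ℝ) := by push_cast; rfl
    rw [this]
    exact Derivation.map_natCast _ _
  induction d with
  | zero =>
    apply PowerSeries.derivative.ext
    · rw [Derivation.leibniz, Derivation.leibniz, hcast, serL_deriv_succ, serL_deriv_zero]
      simp only [smul_eq_mul, Nat.cast_zero]
      ring
    · simp [serL, truncE]
  | succ d ih =>
    apply PowerSeries.derivative.ext
    · rw [Derivation.leibniz, Derivation.leibniz, hcast, serL_deriv_succ, serL_deriv_zero,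
        serL_deriv_succ]
      simp only [smul_eq_mul, Nat.cast_add, Nat.cast_one]
      linear_combination (PowerSeries.mk (fun _ => (1 : ℝ))) * ih
    · simp [serL, truncE]

/-- The inner alternating sum. -/
noncomputable def altW (d n : ℕ) : ℝ :=
  ∑ l ∈ Finset.range n, (-1 : ℝ) ^ l * ((1 / (l : ℝ)) * truncE d l)

theorem coeff_serL_serAlt (d m : ℕ) :
    PowerSeries.coeff m (serL d * serAlt) = (-1) ^ m * altW d m := by
  rw [PowerSeries.coeff_mul, Finset.Nat.sum_antidiagonal_eq_sum_range_succ_mk,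
    Finset.sum_range_succ, altW, Finset.mul_sum]
  simp only [serL, serAlt, PowerSeries.coeff_mk, Nat.sub_self, if_true, mul_zero, add_zero]
  refine Finset.sum_congr rfl fun l hl => ?_
  have hl := Finset.mem_range.1 hl
  rw [if_neg (by omega)]
  obtain ⟨r, rfl⟩ := Nat.exists_eq_add_of_lt hl
  rw [show l + r + 1 - l = r + 1 by omega, show l + r + 1 = l + (r + 1) by omega, pow_add]
  have : (-1 : ℝ) ^ l * (-1) ^ l = 1 := by rw [← mul_pow]; simp
  linear_combination (-(-1 : ℝ)^(r+1) * (1 / (l : ℝ) * truncE d l)) * this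

theorem conv_altW (d k : ℕ) :
    ∑ m ∈ Finset.range k, ((-1 : ℝ) ^ m * altW d m) * (1 / ((k : ℝ) - m)) =
      ((d : ℝ) + 2) * ((-1) ^ k * altW (d + 1) k) := by
  have h : (serL d * serAlt) * serL 0 = ((d : PowerSeries ℝ) + 2) * (serL (d + 1) * serAlt) := by
    linear_combination serAlt * serL_mul d
  have h2 := congrArg (PowerSeries.coeff k) h
  have h3 : ((d : PowerSeries ℝ) + 2) = PowerSeries.C ((d : ℝ) + 2) := by
    rw [map_add, map_natCast, map_ofNat]
  rw [h3, PowerSeries.coeff_C_mul, coeff_serL_serAlt, PowerSeries.coeff_mul,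
    Finset.Nat.sum_antidiagonal_eq_sum_range_succ_mk, Finset.sum_range_succ] at h2
  rw [← h2]
  simp only [coeff_serL_serAlt]
  simp only [serL, PowerSeries.coeff_mk, Nat.sub_self, truncE, Nat.cast_zero, div_zero, mul_zero,
    mul_one, add_zero]
  refine Finset.sum_congr rfl fun l hl => ?_
  rw [Nat.cast_sub (Finset.mem_range.1 hl).le]

theorem sum_mul_sum_range (f g : ℕ → ℝ) (n : ℕ) :
    (∑ i ∈ Finset.range n, f i) * (∑ i ∈ Finset.range n, g i) =
      ∑ i ∈ Finset.range n, f i * (∑ j ∈ Finset.range i, g j) +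
      ∑ i ∈ Finset.range n, g i * (∑ j ∈ Finset.range i, f j) +
      ∑ i ∈ Finset.range n, f i * g i := by
  induction n with
  | zero => simp
  | succ n ih =>
    simp only [Finset.sum_range_succ]
    linear_combination ih

theorem truncZ_ones (d n : ℕ) : truncZ d (fun _ => 1) (fun _ => 1) n = truncE d n := by
  induction d generalizing n with
  | zero => rfl
  | succ d ih => simp [truncZ, truncE, ih]

/-- One argument equal to two (at position `j`), the others equal to one. -/
noncomputable def truncF (d j n : ℕ) : ℝ :=
  truncZ d (fun i => if (i : ℕ) = j then 2 else 1) (fun _ => 1) n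

theorem truncF_zero (d n : ℕ) : truncF (d + 1) 0 n =
    ∑ k ∈ Finset.range n, (1 / (k : ℝ) ^ 2) * truncE d k := by
  simp [truncF, truncZ, truncZ_ones]

theorem truncF_succ (d j n : ℕ) : truncF (d + 1) (j + 1) n =
    ∑ k ∈ Finset.range n, (1 / (k : ℝ)) * truncF d j k := by
  simp [truncF, truncZ]

theorem stuffle (d n : ℕ) : truncE 1 n * truncE d n =
    ((d : ℝ) + 1) * truncE (d + 1) n + ∑ j ∈ Finset.range d, truncF d j n := by
  induction d generalizing n with
  | zero => simp [truncE]
  | succ d ih =>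
    rw [Finset.sum_range_succ', truncF_zero]
    simp only [truncF_succ]
    rw [Finset.sum_comm]
    have h1 : truncE 1 n * truncE (d + 1) n = (∑ k ∈ Finset.range n, 1 / (k : ℝ)) *
        (∑ k ∈ Finset.range n, (1 / (k : ℝ)) * truncE d k) := by simp [truncE]
    rw [h1, sum_mul_sum_range]
    have h2 : ∀ i : ℕ, ∑ j ∈ Finset.range i, 1 / (j : ℝ) = truncE 1 i := by simp [truncE]
    have h3 : ∀ i : ℕ, ∑ j ∈ Finset.range i, (1 / (j : ℝ)) * truncE d j = truncE (d + 1) i :=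
      fun i => rfl
    simp only [h2, h3]
    rw [show truncE (d + 1 + 1) n = ∑ k ∈ Finset.range n, (1 / (k : ℝ)) * truncE (d + 1) k from rfl,
      Finset.mul_sum, ← Finset.sum_add_distrib, ← Finset.sum_add_distrib,
      ← Finset.sum_add_distrib, ← Finset.sum_add_distrib]
    refine Finset.sum_congr rfl fun i _ => ?_
    rw [← Finset.mul_sum]
    push_cast
    linear_combination (1 / (i : ℝ)) * ih i

theorem stuffle_alt (d n : ℕ) : truncE 1 n * altW d n =
    ∑ m ∈ Finset.range n, (1 / (m : ℝ)) * altW d m +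
    ((d : ℝ) + 1) * altW (d + 1) n +
    ∑ l ∈ Finset.range n, (-1 : ℝ) ^ l * ((1 / (l : ℝ) ^ 2) * truncE d l) +
    ∑ j ∈ Finset.range d, ∑ l ∈ Finset.range n, (-1 : ℝ) ^ l * ((1 / (l : ℝ)) * truncF d j l) := by
  have h1 : truncE 1 n * altW d n = (∑ k ∈ Finset.range n, 1 / (k : ℝ)) *
        (∑ l ∈ Finset.range n, (-1 : ℝ) ^ l * ((1 / (l : ℝ)) * truncE d l)) := by
    simp [truncE, altW]
  have h2 : ∀ i : ℕ, ∑ j ∈ Finset.range i, 1 / (j : ℝ) = truncE 1 i := by simp [truncE]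
  rw [h1, sum_mul_sum_range, Finset.sum_comm (s := Finset.range d)]
  simp only [h2]
  simp only [altW]
  rw [Finset.mul_sum, ← Finset.sum_add_distrib, ← Finset.sum_add_distrib,
      ← Finset.sum_add_distrib, ← Finset.sum_add_distrib, ← Finset.sum_add_distrib]
  refine Finset.sum_congr rfl fun i _ => ?_
  rw [← Finset.mul_sum, ← Finset.mul_sum]
  linear_combination ((-1) ^ i * (1 / (i : ℝ))) * stuffle d i

theorem geom_identity (r : ℕ) (x y : ℝ) (hx : x ≠ 0) (hy : y ≠ 0) (hxy : x - y ≠ 0) :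
    ∑ a ∈ Finset.Icc 2 (r + 1), (1 / x ^ a) * (1 / y ^ (r + 2 - a)) =
      1 / (y ^ r * x * (x - y)) - 1 / ((x - y) * x ^ (r + 1)) := by
  induction r with
  | zero => simp; field_simp; simp
  | succ r ih =>
    rw [Finset.sum_Icc_succ_top (by omega)]
    have : ∑ a ∈ Finset.Icc 2 (r + 1), (1 / x ^ a) * (1 / y ^ (r + 1 + 2 - a)) =
      (1 / y) * ∑ a ∈ Finset.Icc 2 (r + 1), (1 / x ^ a) * (1 / y ^ (r + 2 - a)) := by
      rw [Finset.mul_sum]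
      refine Finset.sum_congr rfl fun a ha => ?_
      have := (Finset.mem_Icc.1 ha).2
      rw [show r + 1 + 2 - a = (r + 2 - a) + 1 by omega, pow_succ]
      field_simp
    rw [this, ih, show r + 1 + 2 - (r + 1 + 1) = 1 by omega]
    field_simp
    ring

theorem hasSum_harmonic (m : ℕ) :
    HasSum (fun j : ℕ => 1 / ((j : ℝ) + 1) - 1 / ((m : ℝ) + j + 1)) (truncE 1 (m + 1)) := by
  induction m with
  | zero => simp [truncE]
  | succ m ih =>
    have h : HasSum (fun j : ℕ => 1 / ((m : ℝ) + j + 1) - 1 / ((m : ℝ) + j + 2))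
        (1 / ((m : ℝ) + 1)) := by
      rw [hasSum_iff_tendsto_nat_of_nonneg]
      · have h1 : ∀ n : ℕ, ∑ j ∈ Finset.range n, (1 / ((m : ℝ) + j + 1) - 1 / ((m : ℝ) + j + 2)) =
            1 / ((m : ℝ) + 1) - 1 / ((n : ℝ) + (m + 1)) := by
          intro n
          have := Finset.sum_range_sub' (fun j : ℕ => 1 / ((m : ℝ) + j + 1)) n
          simp only [Nat.cast_zero, add_zero] at this
          rw [show (n : ℝ) + (m + 1) = m + n + 1 by ring, ← this]
          refine Finset.sum_congr rfl fun j _ => ?_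
          push_cast
          ring_nf
        simp only [h1]
        have h2 : Filter.Tendsto (fun n : ℕ => 1 / ((n : ℝ) + (m + 1))) Filter.atTop (nhds 0) := by
          simp only [one_div]
          exact Filter.Tendsto.comp tendsto_inv_atTop_zero
            (Filter.tendsto_atTop_add_const_right _ _ tendsto_natCast_atTop_atTop)
        simpa using (tendsto_const_nhds (x := 1 / ((m : ℝ) + 1))).sub h2
      · intro j
        rw [sub_nonneg]
        apply one_div_le_one_div_of_le (by positivity)
        linarith
    have h3 := ih.add h
    have h4 : truncE 1 (m + 1 + 1) = truncE 1 (m + 1) + 1 / ((m : ℝ) + 1) := by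
      simp only [truncE]
      rw [Finset.sum_range_succ _ (m + 1)]
      simp
    rw [h4]
    refine hasSum_of_eq_fun h3 fun j => ?_
    push_cast
    ring_nf

theorem fubini_sum (g : ℕ → ℝ) (r : ℕ) (X : ℝ) (hg0 : g 0 = 0)
    (hX : HasSum (fun k : ℕ => g k / (k : ℝ) ^ (r + 1) * truncE 1 (k + 1)) X) :
    HasSum (fun k : ℕ => ∑ m ∈ Finset.range k, g m * (1 / ((m : ℝ) ^ r * k * (k - m)))) X := by
  have inner : ∀ (g : ℕ → ℝ), g 0 = 0 → ∀ m : ℕ,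
      HasSum (fun j : ℕ => g m * (1 / ((m : ℝ) ^ r * (m + j + 1) * (j + 1))))
        (g m / (m : ℝ) ^ (r + 1) * truncE 1 (m + 1)) := by
    intro g hg0 m
    rcases Nat.eq_zero_or_pos m with h | h
    · subst h
      simp [hg0]
    · refine hasSum_of_eq_fun ((hasSum_harmonic m).mul_left (g m / (m : ℝ) ^ (r + 1))) fun j => ?_
      have : (m : ℝ) ≠ 0 := by positivity
      have h2 : (j : ℝ) + 1 ≠ 0 := by positivity
      have h3 : (m : ℝ) + j + 1 ≠ 0 := by positivity
      field_simp
      ring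
  set f : ℕ × ℕ → ℝ := fun p => g p.1 * (1 / ((p.1 : ℝ) ^ r * (p.1 + p.2 + 1) * (p.2 + 1))) with hf
  have hfs : Summable f := by
    rw [← summable_abs_iff, summable_prod_of_nonneg (fun _ => abs_nonneg _)]
    have hab : ∀ m j : ℕ, |f (m, j)| =
        |g m| * (1 / ((m : ℝ) ^ r * (m + j + 1) * (j + 1))) := by
      intro m j
      simp only [hf]
      rw [abs_mul, abs_of_nonneg (show (0:ℝ) ≤ (1 / ((m : ℝ) ^ r * (m + j + 1) * (j + 1))) by
        positivity)]
    have hi := inner (fun m => |g m|) (by simp [hg0])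
    simp only [hab]
    refine ⟨fun m => (hi m).summable, ?_⟩
    simp only [(hi _).tsum_eq]
    refine hX.summable.abs.congr fun k => ?_
    rw [abs_mul, abs_div, abs_of_nonneg (truncE_nonneg _ _),
      abs_of_nonneg (show (0:ℝ) ≤ (k : ℝ) ^ (r + 1) by positivity)]
  have hfX : HasSum f X := by
    have h1 := hfs.hasSum
    have h2 := HasSum.prod_fiberwise h1 (inner g hg0)
    rw [hX.unique h2]
    exact h1
  have h1 := (Finset.HasAntidiagonal.sigmaAntidiagonalEquivProd (A := ℕ)).hasSum_iff.2 hfX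
  have h2 := h1.sigma (fun N => hasSum_fintype _)
  rw [← hasSum_nat_add_iff' 1]
  simp only [Finset.sum_range_one, Finset.range_zero, Finset.sum_empty, sub_zero]
  refine hasSum_of_eq_fun h2 fun N => ?_
  simp only [Function.comp, Finset.HasAntidiagonal.sigmaAntidiagonalEquivProd_apply]
  rw [Finset.sum_coe_sort (Finset.HasAntidiagonal.antidiagonal N) f,
    Finset.Nat.sum_antidiagonal_eq_sum_range_succ_mk]
  refine Finset.sum_congr rfl fun m hm => ?_
  simp only [hf]
  have hm : m ≤ N := by have := Finset.mem_range.1 hm; omega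
  push_cast [Nat.cast_sub hm]
  ring_nf

theorem eulerSum_hasSum (d : ℕ) (s : Fin (d+1) → ℕ) (μ : Fin (d+1) → ℤ) (hs : ∀ i, 1 ≤ s i)
    (hμ : ∀ i, |(μ i : ℝ)| = 1) (hs0 : 2 ≤ s 0) (f : ℕ → ℝ)
    (hf : ∀ k : ℕ, f k = ((μ 0 : ℝ) ^ k / (k : ℝ) ^ s 0) *
      truncZ d (fun i => s i.succ) (fun i => μ i.succ) k) : HasSum f (eulerSum s μ) := by
  rw [eulerSum_eq d s μ hs hμ hs0]
  exact hasSum_of_eq_fun (summable_truncZ d _ _ (fun i => hs _) (fun i => hμ _) (μ 0) (hμ 0)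
    (s 0) hs0).hasSum hf

theorem abs_ite_one (p : Prop) [Decidable p] : |((if p then (-1 : ℤ) else 1 : ℤ) : ℝ)| = 1 := by
  split_ifs <;> simp

theorem sum_a_bbar_onebar_ones (u d : ℕ) (hu : 3 ≤ u) (q : ℕ) (hq : q = u - 1) :
    -- Σ_{a+b=u, a≥2, b≥1} ζ(a, b̄, 1̄, 1_d)
    (∑ a ∈ Finset.Icc 2 (u - 1),
        eulerSum
          (fun n : Fin (d + 3) => if (n : ℕ) = 0 then a else if (n : ℕ) = 1 then u - a else 1)
          (fun n : Fin (d + 3) => if (n : ℕ) = 1 ∨ (n : ℕ) = 2 then -1 else 1))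
    =
    -- ζ(q̄, 1, 1̄, 1_d)
    eulerSum (fun n : Fin (d + 3) => if (n : ℕ) = 0 then q else 1)
        (fun n : Fin (d + 3) => if (n : ℕ) = 0 ∨ (n : ℕ) = 2 then -1 else 1)
    -- − ζ(q̄, 1̄, 1, 1_d)
    - eulerSum (fun n : Fin (d + 3) => if (n : ℕ) = 0 then q else 1)
        (fun n : Fin (d + 3) => if (n : ℕ) = 0 ∨ (n : ℕ) = 1 then -1 else 1)
    -- + ζ(ū, 1̄, 1_d)
    + eulerSum (fun n : Fin (d + 2) => if (n : ℕ) = 0 then u else 1)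
        (fun n : Fin (d + 2) => if (n : ℕ) = 0 ∨ (n : ℕ) = 1 then -1 else 1)
    -- + ζ(q̄, 2̄, 1_d)
    + eulerSum (fun n : Fin (d + 2) => if (n : ℕ) = 0 then q else if (n : ℕ) = 1 then 2 else 1)
        (fun n : Fin (d + 2) => if (n : ℕ) = 0 ∨ (n : ℕ) = 1 then -1 else 1)
    -- + Σ_{j=1}^{d} ζ(q̄, 1̄, 1_{j−1}, 2, 1_{d−j})
    + ∑ j ∈ Finset.Icc 1 d,
        eulerSum
          (fun n : Fin (d + 2) => if (n : ℕ) = 0 then q else if (n : ℕ) = j + 1 then 2 else 1)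
          (fun n : Fin (d + 2) => if (n : ℕ) = 0 ∨ (n : ℕ) = 1 then -1 else 1) := by

  obtain ⟨r, rfl⟩ : ∃ r, u = r + 2 := ⟨u - 2, by omega⟩
  obtain rfl : q = r + 1 := by omega
  clear hq
  have hr : 1 ≤ r := by omega
  have hmod : 2 % (d + 3) = 2 := Nat.mod_eq_of_lt (by omega)
  rw [show r + 2 - 1 = r + 1 by omega]
  set e2 := eulerSum (fun n : Fin (d + 3) => if (n : ℕ) = 0 then r + 1 else 1)
        (fun n : Fin (d + 3) => if (n : ℕ) = 0 ∨ (n : ℕ) = 2 then -1 else 1) with he2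
  set e3 := eulerSum (fun n : Fin (d + 3) => if (n : ℕ) = 0 then r + 1 else 1)
        (fun n : Fin (d + 3) => if (n : ℕ) = 0 ∨ (n : ℕ) = 1 then -1 else 1) with he3
  set e4 := eulerSum (fun n : Fin (d + 2) => if (n : ℕ) = 0 then r + 2 else 1)
        (fun n : Fin (d + 2) => if (n : ℕ) = 0 ∨ (n : ℕ) = 1 then -1 else 1) with he4
  set e5 := eulerSum
        (fun n : Fin (d + 2) => if (n : ℕ) = 0 then r + 1 else if (n : ℕ) = 1 then 2 else 1)
        (fun n : Fin (d + 2) => if (n : ℕ) = 0 ∨ (n : ℕ) = 1 then -1 else 1) with he5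
  have h2 : HasSum (fun k : ℕ => (-1) ^ k / (k : ℝ) ^ (r + 1) *
      ∑ m ∈ Finset.range k, (1 / (m : ℝ)) * altW d m) e2 := by
    refine eulerSum_hasSum _ _ _ ?_ (fun i => abs_ite_one _) ?_ _ ?_
    · intro i; split_ifs <;> omega
    · simp; omega
    · intro k
      simp [hmod, truncZ, truncZ_ones, altW, div_eq_mul_inv, mul_assoc]
  have h3 : HasSum (fun k : ℕ => (-1) ^ k / (k : ℝ) ^ (r + 1) * altW (d + 1) k) e3 := by
    refine eulerSum_hasSum _ _ _ ?_ (fun i => abs_ite_one _) ?_ _ ?_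
    · intro i; split_ifs <;> omega
    · simp; omega
    · intro k
      simp [hmod, truncZ, truncZ_ones, altW, truncE, div_eq_mul_inv, mul_assoc]
  have h4 : HasSum (fun k : ℕ => (-1) ^ k / (k : ℝ) ^ (r + 2) * altW d k) e4 := by
    refine eulerSum_hasSum _ _ _ ?_ (fun i => abs_ite_one _) ?_ _ ?_
    · intro i; split_ifs <;> omega
    · simp
    · intro k
      simp [hmod, truncZ, truncZ_ones, altW, div_eq_mul_inv, mul_assoc]
  have h5 : HasSum (fun k : ℕ => (-1) ^ k / (k : ℝ) ^ (r + 1) *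
      ∑ l ∈ Finset.range k, (-1 : ℝ) ^ l * ((1 / (l : ℝ) ^ 2) * truncE d l)) e5 := by
    refine eulerSum_hasSum _ _ _ ?_ (fun i => abs_ite_one _) ?_ _ ?_
    · intro i; split_ifs <;> omega
    · simp; omega
    · intro k
      simp [truncZ, truncZ_ones, div_eq_mul_inv, mul_assoc]
  have hIcc : ∀ F : ℕ → ℝ, ∑ j ∈ Finset.Icc 1 d, F j = ∑ j ∈ Finset.range d, F (j + 1) := by
    intro F
    rw [Finset.range_eq_Ico, Finset.sum_Ico_add' F 0 d 1]
    rfl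
  rw [hIcc]
  have h6 : ∀ j ∈ Finset.range d, HasSum (fun k : ℕ => (-1) ^ k / (k : ℝ) ^ (r + 1) *
      ∑ l ∈ Finset.range k, (-1 : ℝ) ^ l * ((1 / (l : ℝ)) * truncF d j l)) (eulerSum
          (fun n : Fin (d + 2) => if (n : ℕ) = 0 then r + 1 else if (n : ℕ) = j + 1 + 1 then 2 else 1)
          (fun n : Fin (d + 2) => if (n : ℕ) = 0 ∨ (n : ℕ) = 1 then -1 else 1)) := by
    intro j _
    refine eulerSum_hasSum _ _ _ ?_ (fun i => abs_ite_one _) ?_ _ ?_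
    · intro i; split_ifs <;> omega
    · simp; omega
    · intro k
      simp [truncZ, truncF, div_eq_mul_inv, mul_assoc]
  have h6' := hasSum_sum h6
  set e6 := ∑ j ∈ Finset.range d, eulerSum
          (fun n : Fin (d + 2) => if (n : ℕ) = 0 then r + 1 else if (n : ℕ) = j + 1 + 1 then 2 else 1)
          (fun n : Fin (d + 2) => if (n : ℕ) = 0 ∨ (n : ℕ) = 1 then -1 else 1) with he6
  have h1 : ∀ a ∈ Finset.Icc 2 (r + 1), HasSum (fun k : ℕ => (1 / (k : ℝ) ^ a) *
      ∑ m ∈ Finset.range k, (1 / (m : ℝ) ^ (r + 2 - a)) * ((-1) ^ m * altW d m)) (eulerSum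
          (fun n : Fin (d + 3) => if (n : ℕ) = 0 then a else if (n : ℕ) = 1 then r + 2 - a else 1)
          (fun n : Fin (d + 3) => if (n : ℕ) = 1 ∨ (n : ℕ) = 2 then -1 else 1)) := by
    intro a ha
    have ha := Finset.mem_Icc.1 ha
    refine eulerSum_hasSum _ _ _ ?_ (fun i => abs_ite_one _) ?_ _ ?_
    · intro i; split_ifs <;> omega
    · simp; omega
    · intro k
      simp [hmod, truncZ, truncZ_ones, altW, div_eq_mul_inv, mul_assoc, mul_left_comm]
  have h1' := hasSum_sum h1
  set g : ℕ → ℝ := fun m => (-1) ^ m * altW d m with hg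
  have hX : HasSum (fun k : ℕ => g k / (k : ℝ) ^ (r + 1) * truncE 1 (k + 1))
      (e2 + ((d : ℝ) + 1) * e3 + e4 + e5 + e6) := by
    refine hasSum_of_eq_fun ((((h2.add (h3.mul_left ((d : ℝ) + 1))).add h4).add h5).add h6')
      fun k => ?_
    have hs : truncE 1 (k + 1) = truncE 1 k + 1 / (k : ℝ) := by
      simp only [truncE]
      rw [Finset.sum_range_succ, mul_one]
    have hk : (1 : ℝ) / (k : ℝ) ^ (r + 2) = 1 / (k : ℝ) ^ (r + 1) * (1 / (k : ℝ)) := by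
      rw [one_div_mul_one_div, ← pow_succ]
    rw [hs, ← Finset.mul_sum]
    simp only [hg]
    linear_combination ((-1) ^ k / (k : ℝ) ^ (r + 1)) * stuffle_alt d k -
      ((-1) ^ k * altW d k) * hk
  have hg0 : g 0 = 0 := by simp [hg, altW]
  have hF := (fubini_sum g r _ hg0 hX).sub (h3.mul_left ((d : ℝ) + 2))
  have hfin : ∀ k : ℕ, ∑ a ∈ Finset.Icc 2 (r + 1), (1 / (k : ℝ) ^ a) *
      ∑ m ∈ Finset.range k, (1 / (m : ℝ) ^ (r + 2 - a)) * g m =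
      ∑ m ∈ Finset.range k, g m * (1 / ((m : ℝ) ^ r * k * (k - m))) -
      ((d : ℝ) + 2) * ((-1) ^ k / (k : ℝ) ^ (r + 1) * altW (d + 1) k) := by
    intro k
    have hc : ((d : ℝ) + 2) * ((-1) ^ k / (k : ℝ) ^ (r + 1) * altW (d + 1) k) =
        ∑ m ∈ Finset.range k, g m * (1 / ((k : ℝ) - m)) * (1 / (k : ℝ) ^ (r + 1)) := by
      rw [← Finset.sum_mul]
      linear_combination (-(1 / (k : ℝ) ^ (r + 1))) * conv_altW d k
    rw [hc, ← Finset.sum_sub_distrib]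
    simp only [Finset.mul_sum]
    rw [Finset.sum_comm]
    refine Finset.sum_congr rfl fun m hm => ?_
    have hmk := Finset.mem_range.1 hm
    rcases Nat.eq_zero_or_pos m with h | h
    · subst h
      simp [hg0]
    · have hk0 : (k : ℝ) ≠ 0 := by
        have : 0 < k := by omega
        positivity
      have hm0 : (m : ℝ) ≠ 0 := by positivity
      have hkm : (k : ℝ) - m ≠ 0 := by
        rw [sub_ne_zero]
        exact_mod_cast hmk.ne'
      have hgeo := geom_identity r k m hk0 hm0 hkm
      have h7 : ∑ a ∈ Finset.Icc 2 (r + 1), 1 / (k : ℝ) ^ a * (1 / (m : ℝ) ^ (r + 2 - a) * g m) =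
          g m * ∑ a ∈ Finset.Icc 2 (r + 1), 1 / (k : ℝ) ^ a * (1 / (m : ℝ) ^ (r + 2 - a)) := by
        rw [Finset.mul_sum]
        exact Finset.sum_congr rfl fun a _ => by ring
      rw [h7, hgeo, mul_sub, mul_assoc (g m), one_div_mul_one_div]
  have hfinal := (hasSum_of_eq_fun hF hfin).unique h1'
  rw [← hfinal]
  ring
end

section
/- Let u ≥ 4 and d ≥ 0 be integers, q = u−1 and p = u−2. Then Σ_{a+b=u, a≥2, b≥1} (a−1)·ζ(a,b,1_d) = ζ(u,1_d) + ζ(2,p,1_d) − p(d+1)·ζ(q,1_{d+1}) + Σ_{j=0}^{d−1} [ ζ(p,1_j,3,1_{d−1−j}) − (d−j)·ζ(p,1_j,2,1_{d−j}) ]. -/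
/-- The multiple zeta value `ζ(s₁,…,s_d) = Σ_{k₁>⋯>k_d≥1} 1/(k₁^{s₁}⋯k_d^{s_d})`. -/
noncomputable def mzv {d : ℕ} (s : Fin d → ℕ) : ℝ :=
  ∑' k : {k : Fin d → ℕ // StrictAnti k ∧ ∀ i, 0 < k i},
    ∏ i, (1 : ℝ) / (k.1 i : ℝ) ^ s i

open PowerSeries in
noncomputable def Ix : Module.End ℝ (PowerSeries ℝ) where
  toFun f := PowerSeries.mk fun n => PowerSeries.coeff n f / n
  map_add' f g := by ext n; simp [add_div]
  map_smul' c f := by ext n; simp [mul_div_assoc]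

noncomputable def Iy : Module.End ℝ (PowerSeries ℝ) where
  toFun f := PowerSeries.mk fun n => (∑ m ∈ Finset.range n, PowerSeries.coeff m f) / n
  map_add' f g := by ext n; simp [add_div, Finset.sum_add_distrib]
  map_smul' c f := by ext n; simp [mul_div_assoc, ← Finset.mul_sum]

lemma coeff_Ix (f : PowerSeries ℝ) (n : ℕ) :
    PowerSeries.coeff n (Ix f) = PowerSeries.coeff n f / n := by simp [Ix]

lemma coeff_Iy (f : PowerSeries ℝ) (n : ℕ) :
    PowerSeries.coeff n (Iy f) = (∑ m ∈ Finset.range n, PowerSeries.coeff m f) / n := by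
  simp [Iy]

noncomputable def th (f : PowerSeries ℝ) : PowerSeries ℝ :=
  PowerSeries.X * PowerSeries.derivative ℝ f

lemma th_mul (f g : PowerSeries ℝ) : th (f * g) = th f * g + f * th g := by
  simp [th, Derivation.leibniz, smul_eq_mul]; ring

lemma th_add (f g : PowerSeries ℝ) : th (f + g) = th f + th g := by
  simp [th, mul_add]

lemma coeff_th (f : PowerSeries ℝ) (n : ℕ) :
    PowerSeries.coeff n (th f) = n * PowerSeries.coeff n f := by
  cases n with
  | zero => simp [th]
  | succ n => simp [th, PowerSeries.coeff_succ_X_mul, PowerSeries.coeff_derivative]; ring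

lemma th_inj {f g : PowerSeries ℝ} (h : th f = th g)
    (h0 : PowerSeries.coeff 0 f = PowerSeries.coeff 0 g) : f = g := by
  ext n
  cases n with
  | zero => exact h0
  | succ n =>
    have := congrArg (PowerSeries.coeff (n+1)) h
    rw [coeff_th, coeff_th] at this
    exact mul_left_cancel₀ (by positivity) this

noncomputable def om : PowerSeries ℝ := PowerSeries.X * PowerSeries.mk 1

lemma coeff_om_mul (f : PowerSeries ℝ) (n : ℕ) :
    PowerSeries.coeff n (om * f) = ∑ m ∈ Finset.range n, PowerSeries.coeff m f := by
  cases n with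
  | zero => simp [om]
  | succ n =>
    rw [om, mul_assoc, PowerSeries.coeff_succ_X_mul, mul_comm, PowerSeries.coeff_mul,
      Finset.Nat.sum_antidiagonal_eq_sum_range_succ_mk]
    simp

lemma th_Iy (f : PowerSeries ℝ) : th (Iy f) = om * f := by
  ext n
  rw [coeff_th, coeff_om_mul, coeff_Iy]
  cases n with
  | zero => simp
  | succ n => field_simp

lemma th_Ix (f : PowerSeries ℝ) (h : PowerSeries.coeff 0 f = 0) : th (Ix f) = f := by
  ext n
  rw [coeff_th, coeff_Ix]
  cases n with
  | zero => simp [h]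
  | succ n => field_simp

lemma Ix0 (f : PowerSeries ℝ) : PowerSeries.coeff 0 (Ix f) = 0 := by rw [coeff_Ix]; simp
lemma Iy0 (f : PowerSeries ℝ) : PowerSeries.coeff 0 (Iy f) = 0 := by rw [coeff_Iy]; simp

lemma mul0 {f g : PowerSeries ℝ} (h : PowerSeries.coeff 0 f = 0 ∨ PowerSeries.coeff 0 g = 0) :
    PowerSeries.coeff 0 (f * g) = 0 := by
  rw [PowerSeries.coeff_zero_eq_constantCoeff] at *
  rw [map_mul]; rcases h with h | h <;> simp [h]

lemma rb_yy (f g : PowerSeries ℝ) : Iy f * Iy g = Iy (f * Iy g) + Iy (Iy f * g) := by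
  apply th_inj
  · simp only [th_mul, th_add, th_Iy]; ring
  · rw [mul0 (Or.inl (Iy0 _)), map_add, Iy0, Iy0, add_zero]

lemma rb_yx (f g : PowerSeries ℝ) (hg : PowerSeries.coeff 0 g = 0) :
    Iy f * Ix g = Iy (f * Ix g) + Ix (Iy f * g) := by
  apply th_inj
  · rw [th_mul, th_add, th_Iy, th_Iy, th_Ix _ hg, th_Ix _ (mul0 (Or.inl (Iy0 _)))]; ring
  · rw [mul0 (Or.inl (Iy0 _)), map_add, Iy0, Ix0, add_zero]

lemma rb_xx (f g : PowerSeries ℝ) (hf : PowerSeries.coeff 0 f = 0)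
    (hg : PowerSeries.coeff 0 g = 0) :
    Ix f * Ix g = Ix (f * Ix g) + Ix (Ix f * g) := by
  apply th_inj
  · rw [th_mul, th_add, th_Ix _ hf, th_Ix _ hg, th_Ix _ (mul0 (Or.inl (Ix0 _))),
      th_Ix _ (mul0 (Or.inl hf))]
  · rw [mul0 (Or.inl (Ix0 _)), map_add, Ix0, Ix0, add_zero]

/-- `y ⧢ y^m`. -/
lemma sh_y_y (m : ℕ) : Iy 1 * (Iy ^ m) 1 = ((m : ℝ) + 1) • (Iy ^ (m + 1)) 1 := by
  induction m with
  | zero => simp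
  | succ m ih =>
    rw [pow_succ' Iy m, Module.End.mul_apply, rb_yy, ih, map_smul, pow_succ' Iy (m + 1),
      Module.End.mul_apply, pow_succ' Iy m, Module.End.mul_apply, one_mul]
    push_cast
    module

lemma c0 (k m : ℕ) : PowerSeries.coeff 0 ((Ix ^ k) ((Iy ^ (m + 1)) 1)) = 0 := by
  cases k with
  | zero => rw [pow_succ', Module.End.mul_apply]; simpa using Iy0 _
  | succ k => rw [pow_succ', Module.End.mul_apply]; exact Ix0 _

/-- `y ⧢ x^k y^m`. -/
lemma sh_y_xy (k m : ℕ) : Iy 1 * (Ix ^ k) ((Iy ^ (m + 1)) 1) =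
    (∑ i ∈ Finset.range k, (Ix ^ i) (Iy ((Ix ^ (k - i)) ((Iy ^ (m + 1)) 1))))
     + ((m : ℝ) + 2) • (Ix ^ k) ((Iy ^ (m + 2)) 1) := by
  induction k with
  | zero =>
    simp only [pow_zero, Module.End.one_apply, Finset.range_zero, Finset.sum_empty, zero_add]
    rw [sh_y_y]; push_cast; congr 1; ring
  | succ k ih =>
    rw [pow_succ' Ix k, Module.End.mul_apply, rb_yx _ _ (c0 _ _), ih, Finset.sum_range_succ',
      map_add, map_smul, map_sum, one_mul]
    simp only [pow_succ' Ix, Module.End.mul_apply, Nat.add_sub_add_right, pow_zero,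
      Module.End.one_apply, Nat.sub_zero]
    abel

/-- `xy ⧢ y^m`. -/
lemma sh_xy_y (m : ℕ) : Ix (Iy 1) * (Iy ^ m) 1 =
    ∑ i ∈ Finset.range (m + 1), ((m : ℝ) - i + 1) • (Iy ^ i) (Ix ((Iy ^ (m - i + 1)) 1)) := by
  induction m with
  | zero => simp
  | succ m ih =>
    rw [pow_succ' Iy m, Module.End.mul_apply, mul_comm, rb_yx _ _ (Iy0 _), 
      mul_comm _ (Ix (Iy 1)), ih, mul_comm _ (Iy 1), ← Module.End.mul_apply, ← pow_succ', sh_y_y,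
      Finset.sum_range_succ' _ (m + 1), map_sum, map_smul]
    simp only [map_smul, pow_succ' Iy, Module.End.mul_apply, Nat.add_sub_add_right, pow_zero,
      Module.End.one_apply, Nat.sub_zero]
    congr 1
    · apply Finset.sum_congr rfl
      intro i _
      congr 1; push_cast; ring
    · congr 1; push_cast; ring

/-- `xy ⧢ x^k y^(m+1)`. -/
lemma sh_xy_xy (k m : ℕ) : Ix (Iy 1) * (Ix ^ k) ((Iy ^ (m + 1)) 1) =
    (∑ j ∈ Finset.range k, ((j : ℝ) + 1) •
      (Ix ^ (j + 1)) (Iy ((Ix ^ (k - j)) ((Iy ^ (m + 1)) 1))))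
     + (((k : ℝ) + 1) * ((m : ℝ) + 2)) • (Ix ^ (k + 1)) ((Iy ^ (m + 2)) 1)
     + ∑ i ∈ Finset.range (m + 1), ((m : ℝ) - i + 1) •
        (Ix ^ k) ((Iy ^ (i + 1)) (Ix ((Iy ^ (m - i + 1)) 1))) := by
  induction k with
  | zero =>
    simp only [pow_zero, Module.End.one_apply, Finset.range_zero, Finset.sum_empty, zero_add]
    rw [sh_xy_y, Finset.sum_range_succ', add_comm]
    simp only [pow_zero, Module.End.one_apply, Nat.add_sub_add_right, Nat.sub_zero, pow_one]
    congr 1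
    · congr 1; push_cast; ring
    · apply Finset.sum_congr rfl
      intro i _
      congr 1; push_cast; ring
  | succ k ih =>
    rw [pow_succ' Ix k, Module.End.mul_apply, rb_xx _ _ (Iy0 _) (c0 _ _), ih,
      ← Module.End.mul_apply, ← pow_succ', sh_y_xy]
    simp only [map_add, map_sum, map_smul]
    simp only [← Module.End.mul_apply, ← pow_succ', ← mul_assoc]
    rw [Finset.sum_range_succ' (fun j : ℕ => ((j : ℝ) + 1) • _)]
    have e : ∀ j ∈ Finset.range k, ((((j + 1 : ℕ) : ℝ) + 1) • (Ix ^ (j + 1 + 1) * Iy * Ix ^ (k + 1 - (j + 1)) * Iy ^ (m + 1)) 1 : PowerSeries ℝ) = (Ix ^ (j + 1 + 1) * Iy * Ix ^ (k + 1 - (j + 1)) * Iy ^ (m + 1)) 1 + ((j : ℝ) + 1) • (Ix ^ (j + 1 + 1) * Iy * Ix ^ (k - j) * Iy ^ (m + 1)) 1 := by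
      intro j _
      rw [Nat.add_sub_add_right]; push_cast; module
    rw [Finset.sum_congr rfl e, Finset.sum_add_distrib, Finset.sum_range_succ']
    push_cast
    module

noncomputable def W : List ℕ → PowerSeries ℝ
  | [] => 1
  | a :: t => (Ix ^ (a - 1)) (Iy (W t))

noncomputable def T : List ℕ → ℕ → ℝ
  | [], _ => 1
  | a :: t, N => ∑ k ∈ Finset.range N, ((k : ℝ) ^ a)⁻¹ * T t k

lemma coeff_Ix_pow (f : PowerSeries ℝ) (k n : ℕ) :
    PowerSeries.coeff n ((Ix ^ k) f) = PowerSeries.coeff n f / (n : ℝ) ^ k := by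
  induction k with
  | zero => simp
  | succ k ih => rw [pow_succ' Ix, Module.End.mul_apply, coeff_Ix, ih, div_div, pow_succ]

lemma W_T (s : List ℕ) (hs : ∀ a ∈ s, 1 ≤ a) (N : ℕ) (hN : 1 ≤ N) :
    ∑ n ∈ Finset.range N, PowerSeries.coeff n (W s) = T s N := by
  induction s generalizing N with
  | nil =>
    obtain ⟨M, rfl⟩ : ∃ M, N = M + 1 := ⟨N - 1, by omega⟩
    rw [Finset.sum_range_succ']
    simp [W, T, PowerSeries.coeff_one]
  | cons a t ih =>
    have ha : 1 ≤ a := hs a (by simp)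
    simp only [W, T]
    apply Finset.sum_congr rfl
    intro n _
    rw [coeff_Ix_pow, coeff_Iy, div_div, ← pow_succ', Nat.sub_add_cancel ha]
    rcases Nat.eq_zero_or_pos n with rfl | hn
    · have : a ≠ 0 := by omega
      simp [this]
    · rw [ih (fun b hb => hs b (by simp [hb])) n hn]
      rw [div_eq_mul_inv, mul_comm]

lemma coeff_W_cons (a : ℕ) (t : List ℕ) (hs : ∀ b ∈ a :: t, 1 ≤ b) (n : ℕ) :
    PowerSeries.coeff n (W (a :: t)) = ((n : ℝ) ^ a)⁻¹ * T t n := by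
  have h1 := W_T (a :: t) hs (n + 1) (by omega)
  rcases Nat.eq_zero_or_pos n with rfl | hn
  · simpa [T] using h1
  · have h2 := W_T (a :: t) hs n hn
    rw [Finset.sum_range_succ, h2] at h1
    simp only [T, Finset.sum_range_succ] at h1
    linarith

lemma T_nonneg (s : List ℕ) (N : ℕ) : 0 ≤ T s N := by
  induction s generalizing N with
  | nil => simp [T]
  | cons a t ih => exact Finset.sum_nonneg fun k _ => mul_nonneg (by positivity) (ih k)

lemma sum_sqrt (N : ℕ) : ∑ k ∈ Finset.range N, (k : ℝ)⁻¹ * √k ≤ 4 * √N := by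
  induction N with
  | zero => simp
  | succ n ih =>
    rw [Finset.sum_range_succ]
    have : (n : ℝ)⁻¹ * √n ≤ 4 * (√(n + 1 : ℕ) - √n) := by
      rcases Nat.eq_zero_or_pos n with rfl | hn
      · simp
      · have hn' : (1 : ℝ) ≤ n := by exact_mod_cast hn
        have ha : (0 : ℝ) < √n := by positivity
        have ha2 : √(n : ℝ) ^ 2 = n := Real.sq_sqrt (by positivity)
        have hb2 : √((n + 1 : ℕ) : ℝ) ^ 2 = n + 1 := by
          rw [Real.sq_sqrt (by positivity)]; push_cast; ring
        have hb : (0 : ℝ) < √((n + 1 : ℕ) : ℝ) := by positivity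
        generalize √((n + 1 : ℕ) : ℝ) = b at *
        generalize √(n : ℝ) = a at *
        rw [← ha2] at hb2 ⊢
        have e : (a ^ 2)⁻¹ * a = 1 / a := by field_simp
        rw [e, div_le_iff₀ ha]
        have h3 : b ≤ 3 * a := by nlinarith
        have h4 : a ≤ b := by nlinarith
        nlinarith
    linarith

lemma T_le (s : List ℕ) (hs : ∀ a ∈ s, 1 ≤ a) (N : ℕ) (hN : 1 ≤ N) :
    T s N ≤ 4 ^ s.length * √N := by
  induction s generalizing N with
  | nil => simpa [T] using hN
  | cons a t ih =>
    have ha : 1 ≤ a := hs a (by simp)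
    calc T (a :: t) N ≤ ∑ k ∈ Finset.range N, 4 ^ t.length * ((k : ℝ)⁻¹ * √k) := by
          apply Finset.sum_le_sum
          intro k _
          rcases Nat.eq_zero_or_pos k with rfl | hk
          · have : a ≠ 0 := by omega
            simp [this]
          · have h1 := ih (fun b hb => hs b (by simp [hb])) k hk
            have hk' : (1 : ℝ) ≤ k := by exact_mod_cast hk
            have h2 : ((k : ℝ) ^ a)⁻¹ ≤ (k : ℝ)⁻¹ := by
              apply inv_anti₀ (by positivity)
              exact le_self_pow₀ hk' (by omega)
            calc _ ≤ (k : ℝ)⁻¹ * (4 ^ t.length * √k) :=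
                  mul_le_mul h2 h1 (T_nonneg _ _) (by positivity)
              _ = _ := by ring
      _ ≤ _ := by
          rw [← Finset.mul_sum, List.length_cons, pow_succ, mul_assoc]
          gcongr
          exact sum_sqrt N

/-- admissible indices -/
def Adm (s : List ℕ) : Prop := ∃ a t, s = a :: t ∧ 2 ≤ a ∧ ∀ b ∈ t, 1 ≤ b

lemma Adm.pos {s : List ℕ} (h : Adm s) : ∀ b ∈ s, 1 ≤ b := by
  obtain ⟨a, t, rfl, ha, ht⟩ := h
  intro b hb
  rcases List.mem_cons.1 hb with rfl | hb
  · omega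
  · exact ht b hb

lemma W_nonneg {s : List ℕ} (h : Adm s) (n : ℕ) : 0 ≤ PowerSeries.coeff n (W s) := by
  have hp := h.pos
  obtain ⟨a, t, rfl, ha, ht⟩ := h
  rw [coeff_W_cons a t hp]
  exact mul_nonneg (by positivity) (T_nonneg _ _)

lemma W_summable {s : List ℕ} (h : Adm s) : Summable fun n => PowerSeries.coeff n (W s) := by
  have hp := h.pos
  have hn := W_nonneg h
  obtain ⟨a, t, rfl, ha, ht⟩ := h
  have hs : Summable fun n : ℕ => (4 : ℝ) ^ t.length * (1 / (n : ℝ) ^ (3 / 2 : ℝ)) :=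
    (Real.summable_one_div_nat_rpow.2 (by norm_num)).mul_left _
  refine Summable.of_nonneg_of_le hn (fun n => ?_) hs
  rw [coeff_W_cons a t hp]
  rcases Nat.eq_zero_or_pos n with rfl | hn
  · have : a ≠ 0 := by omega
    simp [this]
  · have h1 := T_le t ht n hn
    have hk' : (1 : ℝ) ≤ n := by exact_mod_cast hn
    have h2 : ((n : ℝ) ^ a)⁻¹ ≤ ((n : ℝ) ^ 2)⁻¹ := by
      apply inv_anti₀ (by positivity)
      exact pow_le_pow_right₀ hk' ha
    calc _ ≤ ((n : ℝ) ^ 2)⁻¹ * (4 ^ t.length * √n) :=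
          mul_le_mul h2 h1 (T_nonneg _ _) (by positivity)
      _ = _ := by
        have : (n : ℝ) ^ (3 / 2 : ℝ) * √n = (n : ℝ) ^ 2 := by
          rw [Real.sqrt_eq_rpow, ← Real.rpow_add (by positivity)]
          norm_num
        have h3 : (0:ℝ) < √n := by positivity
        rw [← this]
        field_simp

noncomputable def Z (s : List ℕ) : ℝ := ∑' n, PowerSeries.coeff n (W s)

lemma W_hasSum {s : List ℕ} (h : Adm s) : HasSum (fun n => PowerSeries.coeff n (W s)) (Z s) :=
  (W_summable h).hasSum

lemma T_tendsto {s : List ℕ} (h : Adm s) : Filter.Tendsto (T s) Filter.atTop (nhds (Z s)) := by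
  refine (W_hasSum h).tendsto_sum_nat.congr' ?_
  filter_upwards [Filter.eventually_ge_atTop 1] with N hN
  exact W_T s h.pos N hN

lemma Z_mul {s t : List ℕ} (hs : Adm s) (ht : Adm t) :
    HasSum (fun n => PowerSeries.coeff n (W s * W t)) (Z s * Z t) := by
  have h1 := (W_summable hs).norm
  have h2 := (W_summable ht).norm
  have := (summable_norm_sum_mul_antidiagonal_of_summable_norm h1 h2).of_norm.hasSum
  rw [← tsum_mul_tsum_eq_tsum_sum_antidiagonal_of_summable_norm h1 h2] at this
  simp only [PowerSeries.coeff_mul]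
  exact this

/-- stuffle of `[r]` with a list -/
def st (r : ℕ) : List ℕ → List (List ℕ)
  | [] => [[r]]
  | a :: t => (r :: a :: t) :: ((r + a) :: t) :: (st r t).map (a :: ·)

lemma T_succ (a : ℕ) (t : List ℕ) (N : ℕ) :
    T (a :: t) (N + 1) = T (a :: t) N + ((N : ℝ) ^ a)⁻¹ * T t N := by
  simp [T, Finset.sum_range_succ]

lemma T_st (r : ℕ) (s : List ℕ) (N : ℕ) :
    T [r] N * T s N = ((st r s).map (T · N)).sum := by
  induction s generalizing N with
  | nil => simp [st, T]
  | cons a t ih =>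
    have hmap : ∀ (l : List (List ℕ)) (N : ℕ), (l.map (fun w => T (a :: w) N)).sum =
        ∑ k ∈ Finset.range N, ((k : ℝ) ^ a)⁻¹ * (l.map (T · k)).sum := by
      intro l N
      induction l with
      | nil => simp
      | cons w l ihl =>
        simp only [List.map_cons, List.sum_cons, ihl, mul_add, Finset.sum_add_distrib]
        rfl
    simp only [st, List.map_cons, List.sum_cons, List.map_map, Function.comp_def]
    rw [hmap]
    simp only [← ih]
    induction N with
    | zero => simp [T]
    | succ n ihn =>
      rw [T_succ r (a :: t), T_succ (r + a), T_succ r [], T_succ a t, Finset.sum_range_succ]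
      have e : T [] n = 1 := by simp [T]
      rw [e, pow_add, mul_inv]
      linear_combination ihn

lemma st_ones {M : Type*} [AddCommMonoid M] (r d : ℕ) (f : List ℕ → M) :
    ((st r (List.replicate d 1)).map f).sum =
      (∑ j ∈ Finset.range (d + 1), f (List.replicate j 1 ++ r :: List.replicate (d - j) 1)) +
      ∑ j ∈ Finset.range d, f (List.replicate j 1 ++ (r + 1) :: List.replicate (d - 1 - j) 1) := by
  induction d generalizing f with
  | zero => simp [st]
  | succ d ih =>
    rw [List.replicate_succ]
    simp only [st, List.map_cons, List.sum_cons, List.map_map]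
    rw [ih, Finset.sum_range_succ' _ (d + 1), Finset.sum_range_succ'
      (fun j => f (List.replicate j 1 ++ (r + 1) :: List.replicate (d + 1 - 1 - j) 1)) d]
    have e : ∀ j, d + 1 - 1 - (j + 1) = d - 1 - j := by intro j; omega
    have e' : ∀ j, d + 1 - (j + 1) = d - j := by intro j; omega
    simp only [e]
    simp only [Function.comp_def, e', List.replicate_succ, List.cons_append,
      List.replicate_zero, List.nil_append, Nat.sub_zero, Nat.add_sub_cancel]
    abel

lemma adm_cons {a : ℕ} {t : List ℕ} (ha : 2 ≤ a) (ht : ∀ b ∈ t, 1 ≤ b) : Adm (a :: t) :=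
  ⟨a, t, rfl, ha, ht⟩

lemma stuffle_s5 (p d : ℕ) (hp : 2 ≤ p) :
    Z [2] * Z (p :: List.replicate d 1) =
      Z (2 :: p :: List.replicate d 1) + Z ((2 + p) :: List.replicate d 1) +
      ((∑ j ∈ Finset.range (d + 1),
        Z (p :: (List.replicate j 1 ++ 2 :: List.replicate (d - j) 1))) +
      ∑ j ∈ Finset.range d,
        Z (p :: (List.replicate j 1 ++ 3 :: List.replicate (d - 1 - j) 1))) := by
  have h1 : ∀ N, T [2] N * T (p :: List.replicate d 1) N = 
      T (2 :: p :: List.replicate d 1) N + T ((2 + p) :: List.replicate d 1) N +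
      ((∑ j ∈ Finset.range (d + 1),
        T (p :: (List.replicate j 1 ++ 2 :: List.replicate (d - j) 1)) N) +
      ∑ j ∈ Finset.range d,
        T (p :: (List.replicate j 1 ++ 3 :: List.replicate (d - 1 - j) 1)) N) := by
    intro N
    rw [T_st]
    simp only [st, List.map_cons, List.sum_cons, List.map_map]
    rw [st_ones]
    simp only [Function.comp_def, add_assoc, Nat.reduceAdd]
  have t1 := (T_tendsto (adm_cons (a := 2) (t := []) le_rfl (by simp))).mul
    (T_tendsto (adm_cons (a := p) (t := List.replicate d 1) hp (by simp)))
  refine tendsto_nhds_unique (t1.congr h1) ?_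
  refine ((T_tendsto (adm_cons le_rfl ?_)).add (T_tendsto (adm_cons (by omega) ?_))).add
    ((tendsto_finsetSum _ fun j _ => T_tendsto (adm_cons hp ?_)).add
      (tendsto_finsetSum _ fun j _ => T_tendsto (adm_cons hp ?_))) <;>
  · simp; try omega

def Cond (N : ℕ∞) {d : ℕ} (k : Fin d → ℕ) : Prop :=
  StrictAnti k ∧ (∀ i, 0 < k i) ∧ ∀ i, (k i : ℕ∞) < N

lemma cond_cons (N : ℕ∞) {d : ℕ} (n : ℕ) (k : Fin d → ℕ) :
    Cond N (Fin.cons n k : Fin (d + 1) → ℕ) ↔ (0 < n ∧ (n : ℕ∞) < N) ∧ Cond n k := by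
  unfold Cond
  constructor
  · rintro ⟨h1, h2, h3⟩
    refine ⟨⟨by simpa using h2 0, by simpa using h3 0⟩, ?_, ?_, ?_⟩
    · intro i j hij
      simpa using h1 (Fin.succ_lt_succ_iff.2 hij)
    · intro i; simpa using h2 i.succ
    · intro i
      have := h1 (Fin.succ_pos i)
      simpa using this
  · rintro ⟨⟨h1, h2⟩, h3, h4, h5⟩
    refine ⟨?_, ?_, ?_⟩
    · intro i j hij
      induction j using Fin.cases with
      | zero => simp at hij
      | succ j =>
        induction i using Fin.cases with
        | zero => simpa using h5 j
        | succ i => simpa using h3 (Fin.succ_lt_succ_iff.1 hij)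
    · intro i
      induction i using Fin.cases with
      | zero => simpa
      | succ i => simpa using h4 i
    · intro i
      induction i using Fin.cases with
      | zero => simpa
      | succ i => simpa using (h5 i).trans h2

open Classical in
noncomputable def E (N : ℕ∞) {d : ℕ} (s : Fin d → ℕ) : ENNReal :=
  ∑' k : Fin d → ℕ, if Cond N k then ∏ i, ENNReal.ofReal (1 / (k i : ℝ) ^ s i) else 0

open Classical in
lemma E_succ (N : ℕ∞) {d : ℕ} (s : Fin (d + 1) → ℕ) :
    E N s = ∑' n : ℕ, if 0 < n ∧ (n : ℕ∞) < N then
      ENNReal.ofReal (1 / (n : ℝ) ^ s 0) * E n (fun i => s i.succ) else 0 := by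
  unfold E
  rw [← (Fin.consEquiv (fun _ => ℕ)).tsum_eq, ENNReal.tsum_prod']
  apply tsum_congr
  intro n
  by_cases h : 0 < n ∧ (n : ℕ∞) < N
  · rw [if_pos h, ← ENNReal.tsum_mul_left]
    apply tsum_congr
    intro k
    simp only [Fin.consEquiv, Equiv.coe_fn_mk, cond_cons, h, true_and, Fin.prod_univ_succ,
      Fin.cons_zero, Fin.cons_succ, mul_ite, mul_zero]
  · rw [if_neg h]
    simp only [Fin.consEquiv, Equiv.coe_fn_mk, cond_cons, h, false_and, if_false, tsum_zero]

lemma E_nat {d : ℕ} (s : Fin d → ℕ) (hs : ∀ i, 1 ≤ s i) (N : ℕ) :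
    E N s = ENNReal.ofReal (T (List.ofFn s) N) := by
  induction d generalizing N with
  | zero =>
    unfold E
    rw [tsum_eq_single default (by intro b hb; exact absurd (Subsingleton.elim _ _) hb)]
    have : Cond N (default : Fin 0 → ℕ) :=
      ⟨fun i => i.elim0, fun i => i.elim0, fun i => i.elim0⟩
    rw [if_pos this]
    simp [T]
  | succ d ih =>
    rw [E_succ, List.ofFn_succ]
    simp only [T]
    rw [ENNReal.ofReal_sum_of_nonneg
      (fun k _ => mul_nonneg (by positivity) (T_nonneg _ _)), tsum_eq_sum (s := Finset.range N)]
    · apply Finset.sum_congr rfl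
      intro n hn
      rw [ih (fun i => s i.succ) (fun i => hs _)]
      have h0 : s 0 ≠ 0 := by have := hs 0; omega
      rcases Nat.eq_zero_or_pos n with rfl | hp
      · simp [h0]
      · rw [if_pos ⟨hp, by simpa using hn⟩, ENNReal.ofReal_mul (by positivity), one_div]
    · intro n hn
      rw [if_neg]
      rintro ⟨_, h⟩
      exact hn (by simpa using h)

lemma mzv_eq_E {d : ℕ} (s : Fin d → ℕ) : mzv s = (E ⊤ s).toReal := by
  classical
  unfold mzv E
  have h1 : ∀ k : Fin d → ℕ, Cond ⊤ k ↔ k ∈ {k : Fin d → ℕ | StrictAnti k ∧ ∀ i, 0 < k i} := by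
    intro k; simp [Cond]
  have h2 := tsum_subtype {k : Fin d → ℕ | StrictAnti k ∧ ∀ i, 0 < k i}
    (fun k => ∏ i, ENNReal.ofReal (1 / (k i : ℝ) ^ s i))
  simp only [Set.indicator_apply, ← h1] at h2
  rw [← h2, ENNReal.tsum_toReal_eq]
  · apply tsum_congr
    intro k
    rw [ENNReal.toReal_prod]
    apply Finset.prod_congr rfl
    intro i _
    rw [ENNReal.toReal_ofReal (by positivity)]
  · intro k
    exact ENNReal.prod_ne_top (fun i _ => ENNReal.ofReal_ne_top)

lemma mzv_eq_Z {d : ℕ} (s : Fin d → ℕ) (l : List ℕ) (hl : List.ofFn s = l) (h : Adm l) :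
    mzv s = Z l := by
  have hp := h.pos
  rw [mzv_eq_E]
  cases d with
  | zero =>
    obtain ⟨a, t, rfl, _⟩ := h
    simp at hl
  | succ d =>
    have hs : ∀ i, 1 ≤ s i := by
      intro i
      apply hp
      rw [← hl, List.mem_ofFn]
      exact ⟨i, rfl⟩
    rw [E_succ]
    have hsum := W_summable h
    have hnn := W_nonneg h
    unfold Z
    rw [← ENNReal.toReal_ofReal (tsum_nonneg hnn), ENNReal.ofReal_tsum_of_nonneg hnn hsum]
    congr 1
    apply tsum_congr
    intro n
    rw [E_nat _ (fun i => hs _)]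
    rw [List.ofFn_succ] at hl
    subst hl
    rw [coeff_W_cons _ _ hp]
    have h0 : s 0 ≠ 0 := by have := hs 0; omega
    rcases Nat.eq_zero_or_pos n with rfl | hp
    · simp [h0]
    · rw [if_pos ⟨hp, by simp⟩, ENNReal.ofReal_mul (by positivity), one_div]

lemma W_ones (m : ℕ) : W (List.replicate m 1) = (Iy ^ m) 1 := by
  induction m with
  | zero => simp [W]
  | succ m ih => simp [List.replicate_succ, W, ih, pow_succ' Iy]

lemma W_ones_append (m : ℕ) (t : List ℕ) : W (List.replicate m 1 ++ t) = (Iy ^ m) (W t) := by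
  induction m with
  | zero => simp
  | succ m ih => simp [List.replicate_succ, W, ih, pow_succ' Iy]

lemma shuffle_W (k d : ℕ) : W [2] * W ((k + 1) :: List.replicate d 1) =
    (∑ j ∈ Finset.range k, ((j : ℝ) + 1) • W ((j + 2) :: (k - j + 1) :: List.replicate d 1))
     + (((k : ℝ) + 1) * ((d : ℝ) + 2)) • W ((k + 2) :: List.replicate (d + 1) 1)
     + ∑ i ∈ Finset.range (d + 1), ((d : ℝ) - i + 1) •
        W ((k + 1) :: (List.replicate i 1 ++ 2 :: List.replicate (d - i) 1)) := by
  have := sh_xy_xy k d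
  simp only [W, W_ones, W_ones_append, Nat.add_sub_cancel]
  simpa only [pow_succ' Iy, Module.End.mul_apply, pow_one, show 2 - 1 = 1 from rfl,
    show ∀ a, a + 2 - 1 = a + 1 from fun _ => rfl] using this

lemma shuffle_Z (k d : ℕ) (hk : 1 ≤ k) : Z [2] * Z ((k + 1) :: List.replicate d 1) =
    (∑ j ∈ Finset.range k, ((j : ℝ) + 1) * Z ((j + 2) :: (k - j + 1) :: List.replicate d 1))
     + (((k : ℝ) + 1) * ((d : ℝ) + 2)) * Z ((k + 2) :: List.replicate (d + 1) 1)
     + ∑ i ∈ Finset.range (d + 1), ((d : ℝ) - i + 1) *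
        Z ((k + 1) :: (List.replicate i 1 ++ 2 :: List.replicate (d - i) 1)) := by
  have h1 := Z_mul (s := [2]) (t := (k + 1) :: List.replicate d 1)
    (adm_cons le_rfl (by simp)) (adm_cons (by omega) (by simp))
  rw [shuffle_W] at h1
  simp only [map_add, map_sum, map_smul, smul_eq_mul] at h1
  refine h1.unique ?_
  refine ((hasSum_sum fun j _ => (W_hasSum (adm_cons ?_ ?_)).mul_left _).add
    ((W_hasSum (adm_cons ?_ ?_)).mul_left _)).add
    (hasSum_sum fun j _ => (W_hasSum (adm_cons ?_ ?_)).mul_left _) <;>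
  · simp; try omega

lemma ofFn1 (a d : ℕ) : List.ofFn (fun n : Fin (d + 1) => if (n : ℕ) = 0 then a else 1) =
    a :: List.replicate d 1 := by
  simp [List.ofFn_succ, List.ofFn_const]

lemma ofFn2 (a b d : ℕ) : List.ofFn (fun n : Fin (d + 2) =>
    if (n : ℕ) = 0 then a else if (n : ℕ) = 1 then b else 1) =
    a :: b :: List.replicate d 1 := by
  simp [List.ofFn_succ, List.ofFn_const]

lemma ofFn3 (a c j e m : ℕ) (hm : m = j + e + 2) : List.ofFn (fun n : Fin m =>
    if (n : ℕ) = 0 then a else if (n : ℕ) = j + 1 then c else 1) =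
    a :: (List.replicate j 1 ++ c :: List.replicate e 1) := by
  subst hm
  apply List.ext_getElem
  · simp; omega
  · intro i h1 h2
    simp only [List.getElem_ofFn]
    rcases i with _ | i
    · simp
    · simp only [List.getElem_cons_succ, List.getElem_append, List.length_replicate,
        List.getElem_replicate, List.getElem_cons]
      grind

theorem weighted_sum_ab_ones_a (u d : ℕ) (hu : 4 ≤ u)
    (q p : ℕ) (hq : q = u - 1) (hp : p = u - 2) :
    -- Σ_{a+b=u, a≥2, b≥1} (a−1)·ζ(a,b,1_d)
    (∑ a ∈ Finset.Icc 2 (u - 1), ((a : ℝ) - 1) *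
        mzv (fun n : Fin (d + 2) =>
          if (n : ℕ) = 0 then a else if (n : ℕ) = 1 then u - a else 1))
    =
    mzv (fun n : Fin (d + 1) => if (n : ℕ) = 0 then u else 1)
    + mzv (fun n : Fin (d + 2) => if (n : ℕ) = 0 then 2 else if (n : ℕ) = 1 then p else 1)
    - (p : ℝ) * ((d : ℝ) + 1) * mzv (fun n : Fin (d + 2) => if (n : ℕ) = 0 then q else 1)
    + ∑ j ∈ Finset.range d,
        (mzv (fun n : Fin (d + 1) =>
            if (n : ℕ) = 0 then p else if (n : ℕ) = j + 1 then 3 else 1)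
         - ((d - j : ℕ) : ℝ) *
            mzv (fun n : Fin (d + 2) =>
              if (n : ℕ) = 0 then p else if (n : ℕ) = j + 1 then 2 else 1)) := by
  obtain ⟨k, rfl⟩ : ∃ k, u = k + 3 := ⟨u - 3, by omega⟩
  obtain rfl : q = k + 2 := by omega
  obtain rfl : p = k + 1 := by omega
  have hk : 1 ≤ k := by omega
  have e1 : ∑ a ∈ Finset.Icc 2 (k + 3 - 1), ((a : ℝ) - 1) *
        mzv (fun n : Fin (d + 2) =>
          if (n : ℕ) = 0 then a else if (n : ℕ) = 1 then k + 3 - a else 1) =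
      (∑ j ∈ Finset.range k, ((j : ℝ) + 1) * Z ((j + 2) :: (k - j + 1) :: List.replicate d 1))
      + ((k : ℝ) + 1) * Z ((k + 2) :: List.replicate (d + 1) 1) := by
    have : Finset.Icc 2 (k + 3 - 1) = Finset.Ico 2 (k + 3) := by ext; simp; omega
    rw [this, Finset.sum_Ico_eq_sum_range, show k + 3 - 2 = k + 1 from by omega,
      Finset.sum_range_succ]
    congr 1
    · apply Finset.sum_congr rfl
      intro j hj
      rw [Finset.mem_range] at hj
      rw [mzv_eq_Z _ _ (ofFn2 _ _ _) (adm_cons (by omega) (by simp; omega)),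
        show 2 + j = j + 2 from by omega, show k + 3 - (j + 2) = k - j + 1 from by omega]
      push_cast; ring
    · rw [mzv_eq_Z _ _ (ofFn2 _ _ _) (adm_cons (by omega) (by simp; omega)),
        show 2 + k = k + 2 from by omega, show k + 3 - (k + 2) = 1 from by omega,
        List.replicate_succ]
      push_cast; ring
  have e2 : ∀ j ∈ Finset.range d, (mzv (fun n : Fin (d + 1) =>
            if (n : ℕ) = 0 then k + 1 else if (n : ℕ) = j + 1 then 3 else 1)
         - ((d - j : ℕ) : ℝ) *
            mzv (fun n : Fin (d + 2) =>
              if (n : ℕ) = 0 then k + 1 else if (n : ℕ) = j + 1 then 2 else 1)) =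
      Z ((k + 1) :: (List.replicate j 1 ++ 3 :: List.replicate (d - 1 - j) 1)) -
      ((d : ℝ) - j) * Z ((k + 1) :: (List.replicate j 1 ++ 2 :: List.replicate (d - j) 1)) := by
    intro j hj
    rw [Finset.mem_range] at hj
    obtain ⟨e, rfl⟩ : ∃ e, d = j + e + 1 := ⟨d - j - 1, by omega⟩
    rw [mzv_eq_Z _ _ (ofFn3 (k + 1) 3 j e _ rfl) (adm_cons (by omega) (by simp; try omega)),
      mzv_eq_Z _ _ (ofFn3 (k + 1) 2 j (e + 1) _ (by omega)) (adm_cons (by omega) (by simp; try omega)),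
      show j + e + 1 - 1 - j = e from by omega, show j + e + 1 - j = e + 1 from by omega]
    push_cast; ring
  rw [e1, Finset.sum_congr rfl e2, mzv_eq_Z _ _ (ofFn1 _ _) (adm_cons (by omega) (by simp)),
    mzv_eq_Z _ _ (ofFn2 _ _ _) (adm_cons (by omega) (by simp)),
    mzv_eq_Z _ _ (ofFn1 _ _) (adm_cons (by omega) (by simp))]
  have h1 := shuffle_Z k d hk
  rw [stuffle_s5 (k + 1) d (by omega), show 2 + (k + 1) = k + 3 from by omega,
    Finset.sum_range_succ, Finset.sum_range_succ _ d] at h1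
  have h3 : ∑ i ∈ Finset.range d, ((d : ℝ) - i + 1) *
        Z ((k + 1) :: (List.replicate i 1 ++ 2 :: List.replicate (d - i) 1)) =
      ∑ i ∈ Finset.range d, ((d : ℝ) - i) *
        Z ((k + 1) :: (List.replicate i 1 ++ 2 :: List.replicate (d - i) 1)) +
      ∑ i ∈ Finset.range d,
        Z ((k + 1) :: (List.replicate i 1 ++ 2 :: List.replicate (d - i) 1)) := by
    rw [← Finset.sum_add_distrib]
    apply Finset.sum_congr rfl
    intro i _
    ring
  rw [h3] at h1
  rw [Finset.sum_sub_distrib]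
  push_cast
  linear_combination -h1
end

section
/- Let w ≥ 4 be an even integer. Then Σ_{a+b+c=w, a≥2, b≥1, c≥1} ((−1)^a + (−1)^b + (−1)^c)·ζ(a,b,c) = (3/2)·ζ(w) − ζ(2)·ζ(w−2). -/
namespace WSum

open Filter Topology Finset

/-- Harmonic numbers. -/
noncomputable def H (r : ℕ) : ℝ := ∑ i ∈ range r, 1 / ((i : ℝ) + 1)

/-- Truncated triple sums. -/
noncomputable def S3 (N : ℕ) (f : ℕ → ℕ → ℕ → ℝ) : ℝ :=
  ∑ x ∈ range N, ∑ y ∈ range N, ∑ z ∈ range N, if z < y ∧ y < x then f x y z else 0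

abbrev Tri := {k : Fin 3 → ℕ // StrictAnti k ∧ ∀ i, 0 < k i}

lemma tri_anti (k : Fin 3 → ℕ) : StrictAnti k ↔ k 1 < k 0 ∧ k 2 < k 1 := by
  rw [Fin.strictAnti_iff_succ_lt]
  simp [Fin.forall_fin_two]

noncomputable def box (N : ℕ) : Finset Tri :=
  (Fintype.piFinset (fun _ : Fin 3 => range (N + 1))).subtype _

lemma box_mem (N : ℕ) (k : Tri) : k ∈ box N ↔ ∀ i, k.1 i < N + 1 := by
  simp [box]

lemma sum_box (N : ℕ) (f : ℕ → ℕ → ℕ → ℝ) :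
    ∑ k ∈ box N, f (k.1 0 - 1) (k.1 1 - 1) (k.1 2 - 1) = S3 N f := by
  unfold S3
  have : ∀ x ∈ range N, ∑ y ∈ range N, ∑ z ∈ range N, (if z < y ∧ y < x then f x y z else 0)
      = ∑ p ∈ range N ×ˢ range N, (if p.2 < p.1 ∧ p.1 < x then f x p.1 p.2 else 0) := by
    intro x _
    rw [Finset.sum_product]
  rw [Finset.sum_congr rfl this, ← Finset.sum_product', ← Finset.sum_filter (s := range N ×ˢ range N ×ˢ range N)
    (p := fun t => t.2.2 < t.2.1 ∧ t.2.1 < t.1) (f := fun t => f t.1 t.2.1 t.2.2)]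
  refine Finset.sum_bij' (fun k _ => (k.1 0 - 1, k.1 1 - 1, k.1 2 - 1))
    (fun t ht => ⟨![t.1 + 1, t.2.1 + 1, t.2.2 + 1], ?_, ?_⟩) ?_ ?_ ?_ ?_ ?_
  · rw [tri_anti]
    simp at ht ⊢
    omega
  · intro i
    fin_cases i <;> simp
  · intro k hk
    rw [box_mem] at hk
    have h1 := (tri_anti _).1 k.2.1
    have h2 := k.2.2
    have := hk 0
    have := h2 2
    simp only [mem_filter, mem_product, mem_range]
    omega
  · intro t ht
    simp at ht
    rw [box_mem]
    intro i
    fin_cases i <;> simp <;> omega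
  · intro k hk
    have h2 := k.2.2
    apply Subtype.ext
    funext i
    have := h2 i
    fin_cases i <;> simp at this ⊢ <;> omega
  · intro t ht
    simp
  · intro k hk
    rfl

lemma hasSum_of_S3 (f : ℕ → ℕ → ℕ → ℝ) (hf : ∀ x y z, 0 ≤ f x y z) (L : ℝ)
    (h : Tendsto (fun N => S3 N f) atTop (𝓝 L)) :
    HasSum (fun k : Tri => f (k.1 0 - 1) (k.1 1 - 1) (k.1 2 - 1)) L := by
  have hmono : Monotone box := by
    intro a b hab k
    rw [box_mem, box_mem]
    intro h i
    have := h i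
    omega
  have ht : Tendsto box atTop atTop := by
    refine tendsto_atTop_finset_of_monotone hmono ?_
    intro k
    refine ⟨k.1 0 + k.1 1 + k.1 2, ?_⟩
    rw [box_mem]
    intro i
    fin_cases i <;> simp <;> omega
  simp_rw [← sum_box] at h
  have hm2 : Monotone (fun N => ∑ k ∈ box N, f (k.1 0 - 1) (k.1 1 - 1) (k.1 2 - 1)) := by
    intro a b hab
    exact Finset.sum_le_sum_of_subset_of_nonneg (hmono hab) (fun _ _ _ => hf _ _ _)
  have hs : Summable (fun k : Tri => f (k.1 0 - 1) (k.1 1 - 1) (k.1 2 - 1)) := by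
    refine summable_of_sum_le (c := L) (fun _ => hf _ _ _) ?_
    intro u
    obtain ⟨N, hN⟩ := (ht.eventually (eventually_ge_atTop u)).exists
    exact (Finset.sum_le_sum_of_subset_of_nonneg hN (fun _ _ _ => hf _ _ _)).trans
      (hm2.ge_of_tendsto h N)
  have := hs.hasSum.comp ht
  rw [← tendsto_nhds_unique this h]
  exact hs.hasSum

lemma sum_tsum_of_S3 {ι : Type*} (I : Finset ι) (g : ι → ℕ → ℕ → ℕ → ℝ)
    (hg : ∀ i x y z, 0 ≤ g i x y z) (L : ℝ)
    (h : Tendsto (fun N => S3 N (fun x y z => ∑ i ∈ I, g i x y z)) atTop (𝓝 L)) :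
    ∑ i ∈ I, ∑' k : Tri, g i (k.1 0 - 1) (k.1 1 - 1) (k.1 2 - 1) = L := by
  have hs := hasSum_of_S3 _ (fun x y z => Finset.sum_nonneg (fun i _ => hg i x y z)) L h
  rw [← hs.tsum_eq, Summable.tsum_finsetSum]
  intro i hi
  refine Summable.of_nonneg_of_le (fun _ => hg _ _ _ _) (fun k => ?_) hs.summable
  exact Finset.single_le_sum (f := fun i => g i (k.1 0 - 1) (k.1 1 - 1) (k.1 2 - 1))
    (fun i _ => hg _ _ _ _) hi

lemma mzv_three (a b c : ℕ) : mzv ![a, b, c] = ∑' k : Tri,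
    (fun x y z : ℕ => (1 / ((x : ℝ) + 1)) ^ a * (1 / ((y : ℝ) + 1)) ^ b * (1 / ((z : ℝ) + 1)) ^ c)
      (k.1 0 - 1) (k.1 1 - 1) (k.1 2 - 1) := by
  unfold mzv
  refine tsum_congr fun k => ?_
  have h : ∀ i, ((k.1 i - 1 : ℕ) : ℝ) + 1 = k.1 i := by
    intro i
    have := k.2.2 i
    rw [Nat.cast_sub (by omega)]
    simp
  simp [Fin.prod_univ_three, h]
  ring

/-- Riemann zeta values, as a series over all of `ℕ`. -/
noncomputable def Z (s : ℕ) : ℝ := ∑' k : ℕ, (1 / ((k : ℝ) + 1)) ^ s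

lemma mzv_one (s : ℕ) : mzv ![s] = Z s := by
  unfold mzv Z
  let e : ℕ ≃ {k : Fin 1 → ℕ // StrictAnti k ∧ ∀ i, 0 < k i} :=
    { toFun := fun n => ⟨fun _ => n + 1, Subsingleton.strictAnti _, fun _ => Nat.succ_pos _⟩
      invFun := fun k => k.1 0 - 1
      left_inv := fun n => by simp
      right_inv := fun k => by
        apply Subtype.ext
        funext i
        have := k.2.2 0
        fin_cases i
        simp
        omega }
  rw [← e.tsum_eq]
  refine tsum_congr fun k => ?_
  simp [e]

lemma summable_Z {s : ℕ} (hs : 2 ≤ s) : Summable (fun k : ℕ => (1 / ((k : ℝ) + 1)) ^ s) := by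
  have := (summable_nat_add_iff 1).2 (Real.summable_one_div_nat_pow.2 (show 1 < s by omega))
  simpa using this

lemma telescope (g : ℕ → ℝ) (N M : ℕ) : ∑ j ∈ range N, (g j - g (j + M)) =
    ∑ i ∈ range M, g i - ∑ i ∈ range M, g (N + i) := by
  have h1 := Finset.sum_range_add g N M
  have h2 := Finset.sum_range_add g M N
  rw [add_comm M N] at h2
  have h3 : ∑ j ∈ range N, g (j + M) = ∑ j ∈ range N, g (M + j) := by simp_rw [add_comm]
  rw [Finset.sum_sub_distrib]
  linarith

lemma telescope_tendsto (g : ℕ → ℝ) (hg : Tendsto g atTop (𝓝 0)) (M : ℕ) :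
    Tendsto (fun N => ∑ j ∈ range N, (g j - g (j + M))) atTop (𝓝 (∑ i ∈ range M, g i)) := by
  simp_rw [telescope]
  have : Tendsto (fun N => ∑ i ∈ range M, g (N + i)) atTop (𝓝 (∑ i ∈ range M, (0 : ℝ))) := by
    refine tendsto_finsetSum _ fun i _ => ?_
    exact hg.comp (tendsto_add_atTop_nat i)
  simpa using tendsto_const_nhds.sub this

/-- Dominated convergence for triangular sums. -/
lemma dom_tendsto (φ : ℕ → ℕ → ℝ) (ψ bound : ℕ → ℝ) (hb : Summable bound)
    (hle : ∀ N k, k < N → |φ N k| ≤ bound k)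
    (ht : ∀ k, Tendsto (fun N => φ N k) atTop (𝓝 (ψ k))) :
    Tendsto (fun N => ∑ k ∈ range N, φ N k) atTop (𝓝 (∑' k, ψ k)) := by
  have h := tendsto_tsum_of_dominated_convergence (𝓕 := atTop)
    (f := fun N k => if k < N then φ N k else 0) (g := ψ) (bound := fun k => |bound k|) hb.abs ?_ ?_
  · refine h.congr fun N => ?_
    rw [tsum_eq_sum (s := range N)]
    · exact Finset.sum_congr rfl fun k hk => by simp [Finset.mem_range.1 hk]
    · intro k hk
      simp at hk
      simp [hk]
  · intro k
    refine (ht k).congr' ?_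
    filter_upwards [eventually_gt_atTop k] with N hN
    simp [hN]
  · refine Eventually.of_forall fun N k => ?_
    by_cases hk : k < N
    · simpa [hk] using (hle N k hk).trans (le_abs_self _)
    · simp [hk]

lemma geo (q r : ℝ) (n : ℕ) :
    (∑ j ∈ range (n + 1), q ^ j * r ^ (n - j)) * (q - r) = q ^ (n + 1) - r ^ (n + 1) := by
  have := (Commute.all q r).geom_sum₂_mul (n + 1)
  simpa using this

lemma hgeo (p q r : ℝ) (m : ℕ) :
    (∑ i ∈ range (m + 1), ∑ j ∈ range (m - i + 1), p ^ i * q ^ j * r ^ (m - i - j)) *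
      ((p - q) * (p - r) * (q - r)) =
    p ^ (m + 2) * (q - r) - q ^ (m + 2) * (p - r) + r ^ (m + 2) * (p - q) := by
  have h1 : (∑ i ∈ range (m + 1), ∑ j ∈ range (m - i + 1), p ^ i * q ^ j * r ^ (m - i - j)) *
      (q - r) = ∑ i ∈ range (m + 1), p ^ i * q ^ (m + 1 - i)
        - ∑ i ∈ range (m + 1), p ^ i * r ^ (m + 1 - i) := by
    rw [Finset.sum_mul, ← Finset.sum_sub_distrib]
    refine Finset.sum_congr rfl fun i hi => ?_
    have hi := Finset.mem_range.1 hi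
    have := geo q r (m - i)
    rw [show m - i + 1 = m + 1 - i by omega] at this
    rw [show m - i + 1 = m + 1 - i by omega, ← mul_sub, ← this, ← mul_assoc, Finset.mul_sum]
    congr 1
    refine Finset.sum_congr rfl fun j hj => ?_
    ring
  have h2 : ∀ t : ℝ, (∑ i ∈ range (m + 1), p ^ i * t ^ (m + 1 - i)) * (p - t)
      = p ^ (m + 2) - t ^ (m + 2) - p ^ (m + 1) * (p - t) := by
    intro t
    have := geo p t (m + 1)
    rw [Finset.sum_range_succ] at this
    simp at this
    linear_combination this
  have hq := h2 q
  have hr := h2 r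
  linear_combination (p - q) * (p - r) * h1 + (p - r) * hq - (p - q) * hr

lemma pt_all (w : ℕ) (hw : 4 ≤ w) (p q r : ℝ) :
    (∑ a ∈ Icc 2 (w - 2), ∑ b ∈ Icc 1 (w - a - 1), p ^ a * q ^ b * r ^ (w - a - b))
      = p ^ 2 * q * r * ∑ i ∈ range (w - 4 + 1), ∑ j ∈ range (w - 4 - i + 1),
        p ^ i * q ^ j * r ^ (w - 4 - i - j) := by
  rw [Finset.mul_sum]
  refine Finset.sum_bij' (fun a _ => a - 2) (fun i _ => i + 2) ?_ ?_ ?_ ?_ ?_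
  · intro a ha; simp at ha ⊢; omega
  · intro a ha; simp at ha ⊢; omega
  · intro a ha; simp at ha ⊢; omega
  · intro a ha; simp at ha ⊢
  · intro a ha
    simp at ha
    rw [Finset.mul_sum]
    refine Finset.sum_bij' (fun a _ => a - 1) (fun i _ => i + 1) ?_ ?_ ?_ ?_ ?_
    · intro b hb; simp at hb ⊢; omega
    · intro b hb; simp at hb ⊢; omega
    · intro b hb; simp at hb ⊢; omega
    · intro b hb; simp at hb ⊢
    · intro b hb
      simp at hb
      obtain ⟨a, rfl⟩ : ∃ ap0, a = ap0 + 2 := ⟨a - 2, by omega⟩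
      obtain ⟨b, rfl⟩ : ∃ bp0, b = bp0 + 1 := ⟨b - 1, by omega⟩
      rw [show w - (a + 2) - (b + 1) = w - 4 - (a + 2 - 2) - (b + 1 - 1) + 1 by omega]
      simp only [Nat.add_sub_cancel]
      ring

lemma pt_all2 (m : ℕ) (x y z : ℕ) (hzy : z < y) (hyx : y < x) (p q r : ℝ)
    (hp : p = 1 / ((x : ℝ) + 1)) (hq : q = 1 / ((y : ℝ) + 1)) (hr : r = 1 / ((z : ℝ) + 1)) :
    (p ^ 2 * q * r * ∑ i ∈ range (m + 1), ∑ j ∈ range (m - i + 1),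
        p ^ i * q ^ j * r ^ (m - i - j)) =
    p ^ (m + 2) * (1 / (((x : ℝ) - y) * (x - z))) - q ^ (m + 1) * (p / ((x - y) * (y - z)))
      + r ^ (m + 1) * (p / ((x - z) * (y - z))) := by
  have h := hgeo p q r m
  have h1 : (z : ℝ) < y := by exact_mod_cast hzy
  have h2 : (y : ℝ) < x := by exact_mod_cast hyx
  have hX : (x : ℝ) + 1 ≠ 0 := by positivity
  have hY : (y : ℝ) + 1 ≠ 0 := by positivity
  have hZ : (z : ℝ) + 1 ≠ 0 := by positivity
  have hp0 : p ≠ 0 := by rw [hp]; positivity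
  have hq0 : q ≠ 0 := by rw [hq]; positivity
  have hr0 : r ≠ 0 := by rw [hr]; positivity
  have e1 : p - q = -(x - y) * (p * q) := by rw [hp, hq]; field_simp; ring
  have e2 : p - r = -(x - z) * (p * r) := by rw [hp, hr]; field_simp; ring
  have e3 : q - r = -(y - z) * (q * r) := by rw [hq, hr]; field_simp; ring
  rw [e1, e2, e3] at h
  have d1 : (x : ℝ) - y ≠ 0 := by linarith
  have d2 : (x : ℝ) - z ≠ 0 := by linarith
  have d3 : (y : ℝ) - z ≠ 0 := by linarith
  generalize (∑ i ∈ range (m + 1), ∑ j ∈ range (m - i + 1), p ^ i * q ^ j * r ^ (m - i - j)) = S at *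
  field_simp
  have hh : q * r ≠ 0 := by positivity
  apply mul_left_cancel₀ hh
  linear_combination -h

lemma hasSum_fun_eq {f g : ℕ → ℝ} {L : ℝ} (h : HasSum g L) (e : ∀ r, f r = g r) : HasSum f L := by
  rwa [show f = g from funext e]

lemma H_succ (n : ℕ) : H (n + 1) = H n + 1 / ((n : ℝ) + 1) := by
  unfold H
  rw [Finset.sum_range_succ]

lemma H_nonneg (n : ℕ) : 0 ≤ H n := Finset.sum_nonneg fun i _ => by positivity

lemma H_mono : Monotone H := monotone_nat_of_le_succ fun n => by
  rw [H_succ]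
  have : 0 ≤ 1 / ((n : ℝ) + 1) := by positivity
  linarith

lemma tendsto_inv (K : ℝ) : Tendsto (fun n : ℕ => 1 / ((n : ℝ) + K)) atTop (𝓝 0) := by
  simp_rw [one_div]
  exact tendsto_inv_atTop_zero.comp (tendsto_atTop_add_const_right _ _ tendsto_natCast_atTop_atTop)

lemma H_div_tendsto (K : ℕ) : Tendsto (fun n : ℕ => H n / ((n : ℝ) + 1 + K)) atTop (𝓝 0) := by
  have h := (tendsto_inv 1).cesaro
  refine squeeze_zero (fun n => div_nonneg (H_nonneg n) (by positivity)) (fun n => ?_) h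
  change _ ≤ (n : ℝ)⁻¹ * H n
  rcases Nat.eq_zero_or_pos n with rfl | hn
  · simp [H]
  · have : (0 : ℝ) < n := by exact_mod_cast hn
    rw [div_eq_inv_mul]
    refine mul_le_mul_of_nonneg_right ?_ (H_nonneg n)
    refine inv_anti₀ this ?_
    have : (0 : ℝ) ≤ K := by positivity
    linarith

lemma hasSum_B (k : ℕ) : HasSum (fun r : ℕ => 1 / (((r : ℝ) + 1) * (r + k + 2)))
    (H (k + 1) / (k + 1)) := by
  rw [hasSum_iff_tendsto_nat_of_nonneg (fun r => by positivity)]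
  have h := (telescope_tendsto (fun r => 1 / ((r : ℝ) + 1)) (tendsto_inv 1) (k + 1)).div_const
    ((k : ℝ) + 1)
  refine h.congr fun N => ?_
  rw [Finset.sum_div]
  refine Finset.sum_congr rfl fun r _ => ?_
  push_cast
  have : (k : ℝ) + 1 ≠ 0 := by positivity
  have : (r : ℝ) + 1 ≠ 0 := by positivity
  have : (r : ℝ) + k + 2 ≠ 0 := by positivity
  have : (r : ℝ) + (k + 1) + 1 ≠ 0 := by positivity
  field_simp
  ring

lemma hasSum_C_step (k : ℕ) : HasSum (fun r : ℕ => H r * (1 / ((r : ℝ) + 1 + k) - 1 / (r + 2 + k)))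
    (H (k + 1) / (k + 1)) := by
  rw [hasSum_iff_tendsto_nat_of_nonneg]
  · have h := (hasSum_B k).tendsto_sum_nat.sub (H_div_tendsto k)
    rw [sub_zero] at h
    refine h.congr fun N => ?_
    induction N with
    | zero => simp [H]
    | succ N ih =>
      rw [Finset.sum_range_succ, Finset.sum_range_succ, ← ih, H_succ]
      push_cast
      have : (N : ℝ) + 1 ≠ 0 := by positivity
      have : (N : ℝ) + k + 2 ≠ 0 := by positivity
      have : (N : ℝ) + 1 + k ≠ 0 := by positivity
      have : (N : ℝ) + 2 + k ≠ 0 := by positivity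
      have : (N : ℝ) + 1 + 1 + k ≠ 0 := by positivity
      field_simp
      ring
  · intro r
    refine mul_nonneg (H_nonneg r) ?_
    rw [sub_nonneg]
    apply one_div_le_one_div_of_le
    · positivity
    · linarith

lemma hasSum_C0 (K : ℕ) : HasSum (fun r : ℕ => H r * (1 / ((r : ℝ) + 1) - 1 / (r + 1 + K)))
    (∑ i ∈ range K, H (i + 1) / ((i : ℝ) + 1)) := by
  induction K with
  | zero => simp
  | succ K ih =>
    rw [Finset.sum_range_succ]
    convert ih.add (hasSum_C_step K) using 2 with r
    push_cast
    rw [show (r : ℝ) + 1 + (K + 1) = r + 2 + K by ring]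
    ring

lemma hasSum_C (k : ℕ) : HasSum (fun r : ℕ => H r / (((r : ℝ) + 1) * (r + k + 2)))
    ((∑ i ∈ range (k + 1), H (i + 1) / ((i : ℝ) + 1)) / (k + 1)) := by
  have h := (hasSum_C0 (k + 1)).div_const ((k : ℝ) + 1)
  refine (hasSum_fun_eq h) ?_
  intro r
  push_cast
  have : (k : ℝ) + 1 ≠ 0 := by positivity
  have : (r : ℝ) + 1 ≠ 0 := by positivity
  have : (r : ℝ) + k + 2 ≠ 0 := by positivity
  have : (r : ℝ) + 1 + (k + 1) ≠ 0 := by positivity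
  field_simp
  ring

lemma H_ident (k : ℕ) : (∑ i ∈ range k, H i / ((i : ℝ) + 1)) - H (k + 1) * H k +
    (∑ i ∈ range (k + 1), H (i + 1) / ((i : ℝ) + 1)) = 1 / ((k : ℝ) + 1) ^ 2 := by
  induction k with
  | zero => simp [H]
  | succ k ih =>
    rw [Finset.sum_range_succ, Finset.sum_range_succ _ (k + 1)]
    rw [H_succ (k + 1), H_succ k] at *
    push_cast at *
    have e : (∑ i ∈ range (k + 1), H (i + 1) / ((i : ℝ) + 1)) = 1 / ((k : ℝ) + 1) ^ 2 -
      (∑ i ∈ range k, H i / ((i : ℝ) + 1)) + (H k + 1 / (↑k + 1)) * H k := by linarith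
    rw [e]
    have : (k : ℝ) + 1 ≠ 0 := by positivity
    have : (k : ℝ) + 1 + 1 ≠ 0 := by positivity
    field_simp
    ring

lemma H_sq_le (k : ℕ) : H (k + 1) ^ 2 ≤ 25 * ((k : ℝ) + 1) ^ (1 / 2 : ℝ) := by
  have h1 : H (k + 1) ≤ 1 + Real.log (k + 1) := by
    have := harmonic_le_one_add_log (k + 1)
    unfold harmonic at this
    push_cast at this
    unfold H
    simpa using this
  have h2 : Real.log ((k : ℝ) + 1) ≤ ((k : ℝ) + 1) ^ (1 / 4 : ℝ) / (1 / 4) :=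
    Real.log_le_rpow_div (by positivity) (by norm_num)
  have h3 : 1 ≤ ((k : ℝ) + 1) ^ (1 / 4 : ℝ) := Real.one_le_rpow (by linarith [(Nat.cast_nonneg k : (0:ℝ) ≤ k)]) (by norm_num)
  have h4 : H (k + 1) ≤ 5 * ((k : ℝ) + 1) ^ (1 / 4 : ℝ) := by linarith
  have h5 : (((k : ℝ) + 1) ^ (1 / 4 : ℝ)) ^ 2 = ((k : ℝ) + 1) ^ (1 / 2 : ℝ) := by
    rw [← Real.rpow_natCast, ← Real.rpow_mul (by positivity)]
    norm_num
  calc H (k + 1) ^ 2 ≤ (5 * ((k : ℝ) + 1) ^ (1 / 4 : ℝ)) ^ 2 :=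
        pow_le_pow_left₀ (H_nonneg _) h4 2
    _ = _ := by rw [mul_pow, h5]; norm_num

lemma summable_H : Summable (fun k : ℕ => H (k + 1) ^ 2 * (1 / ((k : ℝ) + 1)) ^ 2) := by
  have h0 := (summable_nat_add_iff 1).2 (Real.summable_nat_rpow.2 (show (-(3 / 2) : ℝ) < -1 by norm_num))
  refine Summable.of_nonneg_of_le (fun k => by positivity) (fun k => ?_) (h0.mul_left 25)
  refine (mul_le_mul_of_nonneg_right (H_sq_le k) (by positivity)).trans (le_of_eq ?_)
  push_cast
  have hk : (0 : ℝ) < (k : ℝ) + 1 := by positivity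
  rw [one_div_pow, mul_assoc, one_div (((k : ℝ) + 1) ^ 2), ← Real.rpow_natCast, ← Real.rpow_neg hk.le, ← Real.rpow_add hk]
  norm_num

lemma sum_gt (N k : ℕ) (g : ℕ → ℝ) : (∑ m ∈ range N, if k < m then g m else 0) =
    ∑ r ∈ range (N - (k + 1)), g (k + 1 + r) := by
  rw [← Finset.sum_filter, ← Finset.sum_Ico_eq_sum_range]
  refine Finset.sum_congr ?_ fun _ _ => rfl
  ext m
  simp
  omega

lemma sum_lt (N m : ℕ) (hm : m ≤ N) (g : ℕ → ℝ) : (∑ j ∈ range N, if j < m then g j else 0) =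
    ∑ j ∈ range m, g j := by
  rw [← Finset.sum_filter]
  refine Finset.sum_congr ?_ fun _ _ => rfl
  ext j
  simp
  omega

lemma sum_btw (N k m : ℕ) (hm : m ≤ N) (g : ℕ → ℝ) :
    (∑ j ∈ range N, if k < j ∧ j < m then g j else 0) = ∑ r ∈ range (m - (k + 1)), g (k + 1 + r) := by
  rw [← sum_gt, ← sum_lt N m hm]
  refine Finset.sum_congr rfl fun j _ => ?_
  by_cases h1 : k < j <;> by_cases h2 : j < m <;> simp [h1, h2]

lemma H_reflect (x : ℕ) : ∑ z ∈ range x, 1 / ((x : ℝ) - z) = H x := by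
  unfold H
  rw [← Finset.sum_range_reflect]
  refine Finset.sum_congr rfl fun i hi => ?_
  have := Finset.mem_range.1 hi
  congr 1
  rw [Nat.sub_sub, Nat.cast_sub (by omega)]
  push_cast
  ring

lemma S3_first (N : ℕ) (f : ℕ → ℝ) :
    S3 N (fun x y z => f x * (1 / (((x : ℝ) - y) * (x - z)))) =
      ∑ k ∈ range N, f k * ∑ i ∈ range k, H i / ((i : ℝ) + 1) := by
  unfold S3
  refine Finset.sum_congr rfl fun x hx => ?_
  have hx := Finset.mem_range.1 hx
  rw [Finset.sum_comm]
  have h1 : ∀ z ∈ range N, (∑ y ∈ range N, if z < y ∧ y < x then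
      f x * (1 / (((x : ℝ) - y) * (x - z))) else 0) =
      if z < x then f x * (1 / ((x : ℝ) - z)) * H (x - (z + 1)) else 0 := by
    intro z _
    rw [sum_btw N z x hx.le (fun y => f x * (1 / (((x : ℝ) - y) * (x - z))))]
    by_cases hz : z < x
    · rw [if_pos hz, ← H_reflect, Finset.mul_sum]
      refine Finset.sum_congr rfl fun r hr => ?_
      rw [Nat.cast_sub (by omega)]
      push_cast
      rw [mul_assoc, one_div_mul_one_div, mul_comm ((x : ℝ) - z)]
      congr 3
      ring
    · rw [if_neg hz, show x - (z + 1) = 0 by omega]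
      simp
  rw [Finset.sum_congr rfl h1, sum_lt N x hx.le (fun z => f x * (1 / ((x : ℝ) - z)) * H (x - (z + 1))),
    ← Finset.sum_range_reflect, Finset.mul_sum]
  refine Finset.sum_congr rfl fun i hi => ?_
  have hi := Finset.mem_range.1 hi
  rw [show x - (x - 1 - i + 1) = i by omega, Nat.sub_sub, Nat.cast_sub (by omega)]
  push_cast
  rw [show (x : ℝ) - (x - (1 + i)) = i + 1 by ring]
  ring

lemma S3_second (N : ℕ) (f : ℕ → ℝ) :
    S3 N (fun x y z => f y * ((1 / ((x : ℝ) + 1)) / (((x : ℝ) - y) * (y - z)))) =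
      ∑ k ∈ range N, f k * ((∑ r ∈ range (N - (k + 1)), 1 / (((r : ℝ) + 1) * (r + k + 2))) * H k) := by
  unfold S3
  rw [Finset.sum_comm]
  refine Finset.sum_congr rfl fun y hy => ?_
  have hy := Finset.mem_range.1 hy
  have h1 : ∀ x ∈ range N, (∑ z ∈ range N, if z < y ∧ y < x then
      f y * ((1 / ((x : ℝ) + 1)) / (((x : ℝ) - y) * (y - z))) else 0) =
      if y < x then f y * (1 / (((x : ℝ) + 1) * (x - y)) * H y) else 0 := by
    intro x _
    by_cases hx : y < x
    · simp only [hx, and_true, if_true]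
      rw [sum_lt N y hy.le (fun z => f y * ((1 / ((x : ℝ) + 1)) / (((x : ℝ) - y) * (y - z)))),
        ← H_reflect, Finset.mul_sum, Finset.mul_sum]
      refine Finset.sum_congr rfl fun r hr => ?_
      rw [div_div, one_div_mul_one_div, mul_assoc]
    · simp [hx]
  rw [Finset.sum_congr rfl h1, sum_gt N y (fun x => f y * (1 / (((x : ℝ) + 1) * (x - y)) * H y)),
    Finset.sum_mul, Finset.mul_sum]
  refine Finset.sum_congr rfl fun r hr => ?_
  push_cast
  congr 3
  ring

lemma S3_third (N : ℕ) (f : ℕ → ℝ) :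
    S3 N (fun x y z => f z * ((1 / ((x : ℝ) + 1)) / (((x : ℝ) - z) * (y - z)))) =
      ∑ k ∈ range N, f k * (∑ r ∈ range (N - (k + 1)), H r / (((r : ℝ) + 1) * (r + k + 2))) := by
  unfold S3
  have h0 : ∀ x ∈ range N, (∑ y ∈ range N, ∑ z ∈ range N, if z < y ∧ y < x then
      f z * ((1 / ((x : ℝ) + 1)) / (((x : ℝ) - z) * (y - z))) else 0) =
      ∑ z ∈ range N, if z < x then f z * (H (x - (z + 1)) / ((x - z) * (x + 1))) else 0 := by
    intro x hx
    have hx := Finset.mem_range.1 hx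
    rw [Finset.sum_comm]
    refine Finset.sum_congr rfl fun z hz => ?_
    rw [sum_btw N z x hx.le (fun y => f z * ((1 / ((x : ℝ) + 1)) / (((x : ℝ) - z) * (y - z))))]
    by_cases hzx : z < x
    · rw [if_pos hzx, H, Finset.sum_div, Finset.mul_sum]
      refine Finset.sum_congr rfl fun r hr => ?_
      push_cast
      rw [div_div, div_div]
      congr 2
      ring
    · rw [if_neg hzx, show x - (z + 1) = 0 by omega]
      simp
  rw [Finset.sum_congr rfl h0, Finset.sum_comm]
  refine Finset.sum_congr rfl fun z hz => ?_
  rw [sum_gt N z (fun x => f z * (H (x - (z + 1)) / ((x - z) * (x + 1)))), Finset.mul_sum]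
  refine Finset.sum_congr rfl fun r hr => ?_
  rw [Nat.add_sub_cancel_left]
  push_cast
  congr 3 <;> ring

lemma S3_congr (N : ℕ) (f g : ℕ → ℕ → ℕ → ℝ) (h : ∀ x y z, z < y → y < x → f x y z = g x y z) :
    S3 N f = S3 N g := by
  unfold S3
  refine Finset.sum_congr rfl fun x _ => Finset.sum_congr rfl fun y _ =>
    Finset.sum_congr rfl fun z _ => ?_
  split_ifs with hc
  · exact h x y z hc.1 hc.2
  · rfl

lemma S3_add (N : ℕ) (f g : ℕ → ℕ → ℕ → ℝ) :
    S3 N (fun x y z => f x y z + g x y z) = S3 N f + S3 N g := by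
  unfold S3
  simp only [← Finset.sum_add_distrib]
  refine Finset.sum_congr rfl fun x _ => Finset.sum_congr rfl fun y _ =>
    Finset.sum_congr rfl fun z _ => ?_
  split_ifs <;> simp

lemma S3_sub (N : ℕ) (f g : ℕ → ℕ → ℕ → ℝ) :
    S3 N (fun x y z => f x y z - g x y z) = S3 N f - S3 N g := by
  unfold S3
  simp only [← Finset.sum_sub_distrib]
  refine Finset.sum_congr rfl fun x _ => Finset.sum_congr rfl fun y _ =>
    Finset.sum_congr rfl fun z _ => ?_
  split_ifs <;> simp

lemma sumA_le (k : ℕ) : ∑ i ∈ range k, H i / ((i : ℝ) + 1) ≤ H (k + 1) ^ 2 := by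
  have h1 : ∑ i ∈ range k, H i / ((i : ℝ) + 1) ≤ H (k + 1) * H k := by
    conv_rhs => rw [H.eq_def k, Finset.mul_sum]
    refine Finset.sum_le_sum fun i hi => ?_
    have hi := Finset.mem_range.1 hi
    rw [div_eq_mul_one_div]
    exact mul_le_mul_of_nonneg_right (H_mono (by omega)) (by positivity)
  have h2 := H_mono (Nat.le_succ k)
  nlinarith [H_nonneg (k + 1)]

lemma sumC_le (k : ℕ) : ∑ i ∈ range (k + 1), H (i + 1) / ((i : ℝ) + 1) ≤ H (k + 1) ^ 2 := by
  rw [sq]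
  conv_rhs => rw [H.eq_def (k + 1), Finset.mul_sum, ← H.eq_def]
  refine Finset.sum_le_sum fun i hi => ?_
  have hi := Finset.mem_range.1 hi
  rw [div_eq_mul_one_div]
  exact mul_le_mul_of_nonneg_right (H_mono (by omega)) (by positivity)

lemma sum_formula_tendsto (m : ℕ) :
    Tendsto (fun N => S3 N (fun x y z => (1 / ((x : ℝ) + 1)) ^ 2 * (1 / ((y : ℝ) + 1)) * (1 / ((z : ℝ) + 1)) *
      ∑ i ∈ range (m + 1), ∑ j ∈ range (m - i + 1),
        (1 / ((x : ℝ) + 1)) ^ i * (1 / ((y : ℝ) + 1)) ^ j * (1 / ((z : ℝ) + 1)) ^ (m - i - j)))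
      atTop (𝓝 (Z (m + 4))) := by
  have key : ∀ N, S3 N (fun x y z => (1 / ((x : ℝ) + 1)) ^ 2 * (1 / ((y : ℝ) + 1)) * (1 / ((z : ℝ) + 1)) *
      ∑ i ∈ range (m + 1), ∑ j ∈ range (m - i + 1),
        (1 / ((x : ℝ) + 1)) ^ i * (1 / ((y : ℝ) + 1)) ^ j * (1 / ((z : ℝ) + 1)) ^ (m - i - j)) =
      ∑ k ∈ range N, ((1 / ((k : ℝ) + 1)) ^ (m + 2) * (∑ i ∈ range k, H i / ((i : ℝ) + 1))
        - (1 / ((k : ℝ) + 1)) ^ (m + 1) * ((∑ r ∈ range (N - (k + 1)), 1 / (((r : ℝ) + 1) * (r + k + 2))) * H k)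
        + (1 / ((k : ℝ) + 1)) ^ (m + 1) * (∑ r ∈ range (N - (k + 1)), H r / (((r : ℝ) + 1) * (r + k + 2)))) := by
    intro N
    rw [Finset.sum_add_distrib, Finset.sum_sub_distrib, ← S3_first N (fun k => (1 / ((k : ℝ) + 1)) ^ (m + 2)),
      ← S3_second N (fun k => (1 / ((k : ℝ) + 1)) ^ (m + 1)),
      ← S3_third N (fun k => (1 / ((k : ℝ) + 1)) ^ (m + 1)), ← S3_sub, ← S3_add]
    exact S3_congr _ _ _ fun x y z hzy hyx => pt_all2 m x y z hzy hyx _ _ _ rfl rfl rfl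
  simp_rw [key]
  unfold Z
  refine dom_tendsto _ _ (fun k => 3 * (H (k + 1) ^ 2 * (1 / ((k : ℝ) + 1)) ^ 2))
    (summable_H.mul_left 3) ?_ ?_
  · intro N k _
    set p : ℝ := 1 / ((k : ℝ) + 1) with hp
    have hp0 : 0 ≤ p := by positivity
    have hp1 : p ≤ 1 := by
      rw [hp, div_le_one (by positivity)]
      linarith [(Nat.cast_nonneg k : (0:ℝ) ≤ k)]
    have a0 : 0 ≤ ∑ i ∈ range k, H i / ((i : ℝ) + 1) :=
      Finset.sum_nonneg fun i _ => div_nonneg (H_nonneg i) (by positivity)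
    have a1 := sumA_le k
    have b1 : (∑ r ∈ range (N - (k + 1)), 1 / (((r : ℝ) + 1) * (r + k + 2))) ≤ H (k + 1) * p := by
      have := sum_le_hasSum (range (N - (k + 1))) (fun r _ => by positivity) (hasSum_B k)
      rwa [div_eq_mul_one_div] at this
    have b0 : 0 ≤ (∑ r ∈ range (N - (k + 1)), 1 / (((r : ℝ) + 1) * (r + k + 2))) :=
      Finset.sum_nonneg fun i _ => by positivity
    have c0 : 0 ≤ (∑ r ∈ range (N - (k + 1)), H r / (((r : ℝ) + 1) * (r + k + 2))) :=
      Finset.sum_nonneg fun i _ => div_nonneg (H_nonneg i) (by positivity)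
    have c1 : (∑ r ∈ range (N - (k + 1)), H r / (((r : ℝ) + 1) * (r + k + 2))) ≤ H (k + 1) ^ 2 * p := by
      have := sum_le_hasSum (range (N - (k + 1))) (fun r _ => div_nonneg (H_nonneg r) (by positivity)) (hasSum_C k)
      rw [div_eq_mul_one_div] at this
      exact this.trans (mul_le_mul_of_nonneg_right (sumC_le k) hp0)
    generalize (∑ r ∈ range (N - (k + 1)), H r / (((r : ℝ) + 1) * (r + k + 2))) = C at *
    generalize (∑ r ∈ range (N - (k + 1)), 1 / (((r : ℝ) + 1) * (r + k + 2))) = B at *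
    generalize (∑ i ∈ range k, H i / ((i : ℝ) + 1)) = A at *
    have hH := H_nonneg k
    have hH1 := H_mono (Nat.le_succ k)
    have hpm : p ^ m ≤ 1 := pow_le_one₀ hp0 hp1
    have hpm0 : 0 ≤ p ^ m := by positivity
    have e1 : 0 ≤ p ^ 2 * A := by positivity
    have e2 : p ^ 2 * A ≤ p ^ 2 * H (k + 1) ^ 2 := by gcongr
    have f1 : 0 ≤ p * (B * H k) := by positivity
    have f2 : p * (B * H k) ≤ p * ((H (k + 1) * p) * H (k + 1)) := by
      have := H_nonneg (k + 1)
      have : 0 ≤ H (k + 1) * p := by positivity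
      gcongr
    have g1 : 0 ≤ p * C := by positivity
    have g2 : p * C ≤ p * (H (k + 1) ^ 2 * p) := by gcongr
    have : p ^ (m + 2) * A - p ^ (m + 1) * (B * H k) + p ^ (m + 1) * C =
      p ^ m * (p ^ 2 * A - p * (B * H k) + p * C) := by ring
    rw [this, abs_mul, abs_of_nonneg hpm0]
    refine (mul_le_of_le_one_left (abs_nonneg _) hpm).trans ?_
    rw [abs_le]
    constructor <;> nlinarith
  · intro k
    have ht : Tendsto (fun N => N - (k + 1)) atTop atTop := tendsto_sub_atTop_nat _
    have hB := (hasSum_B k).tendsto_sum_nat.comp ht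
    have hC := (hasSum_C k).tendsto_sum_nat.comp ht
    have := (((tendsto_const_nhds (x := (1 / ((k : ℝ) + 1)) ^ (m + 2) * (∑ i ∈ range k, H i / ((i : ℝ) + 1)))).sub
      ((hB.mul_const (H k)).const_mul ((1 / ((k : ℝ) + 1)) ^ (m + 1))))).add (hC.const_mul ((1 / ((k : ℝ) + 1)) ^ (m + 1)))
    have hlim : (1 / ((k : ℝ) + 1)) ^ (m + 2) * ∑ i ∈ range k, H i / ((i : ℝ) + 1) -
          (1 / ((k : ℝ) + 1)) ^ (m + 1) * (H (k + 1) / ((k : ℝ) + 1) * H k) +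
        (1 / ((k : ℝ) + 1)) ^ (m + 1) * ((∑ i ∈ range (k + 1), H (i + 1) / ((i : ℝ) + 1)) / ((k : ℝ) + 1))
        = (1 / ((k : ℝ) + 1)) ^ (m + 4) := by
      have hi := H_ident k
      have e : (1 / ((k : ℝ) + 1)) ^ 2 = 1 / ((k : ℝ) + 1) ^ 2 := by rw [one_div_pow]
      rw [← e] at hi
      rw [div_eq_mul_one_div (H (k + 1)), div_eq_mul_one_div (∑ i ∈ range (k + 1), H (i + 1) / ((i : ℝ) + 1))]
      generalize (1 / ((k : ℝ) + 1)) = p at *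
      linear_combination p ^ (m + 2) * hi
    rw [hlim] at this
    exact this

/-- `k² / (j² - k²)` in shifted indices, with the value `0` at `j = k`. -/
noncomputable def gg (k j : ℕ) : ℝ := ((k : ℝ) + 1) ^ 2 / (((j : ℝ) + 1) ^ 2 - ((k : ℝ) + 1) ^ 2)

lemma gg_self (k : ℕ) : gg k k = 0 := by simp [gg]

lemma pt_even (n : ℕ) (x y z : ℕ) (hzy : z < y) (hyx : y < x) (p q r : ℝ)
    (hp : p = 1 / ((x : ℝ) + 1)) (hq : q = 1 / ((y : ℝ) + 1)) (hr : r = 1 / ((z : ℝ) + 1)) :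
    (p ^ 2 * q ^ 2 * r ^ 2 * ∑ i ∈ range (n + 1), ∑ j ∈ range (n - i + 1),
        (p ^ 2) ^ i * (q ^ 2) ^ j * (r ^ 2) ^ (n - i - j)) =
    p ^ (2 * n + 6) * (gg x y * gg x z) + q ^ (2 * n + 6) * (gg y x * gg y z)
      + r ^ (2 * n + 6) * (gg z x * gg z y) := by
  have h := hgeo (p ^ 2) (q ^ 2) (r ^ 2) n
  generalize (∑ i ∈ range (n + 1), ∑ j ∈ range (n - i + 1),
        (p ^ 2) ^ i * (q ^ 2) ^ j * (r ^ 2) ^ (n - i - j)) = S at *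
  have h1 : (z : ℝ) < y := by exact_mod_cast hzy
  have h2 : (y : ℝ) < x := by exact_mod_cast hyx
  have hp0 : 0 < p := by rw [hp]; positivity
  have hq0 : 0 < q := by rw [hq]; positivity
  have hr0 : 0 < r := by rw [hr]; positivity
  have hpq : p < q := by
    rw [hp, hq]; apply one_div_lt_one_div_of_lt <;> [positivity; linarith]
  have hqr : q < r := by
    rw [hq, hr]; apply one_div_lt_one_div_of_lt <;> [positivity; linarith]
  have eX : (x : ℝ) + 1 = 1 / p := by rw [hp]; simp
  have eY : (y : ℝ) + 1 = 1 / q := by rw [hq]; simp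
  have eZ : (z : ℝ) + 1 = 1 / r := by rw [hr]; simp
  have d1 : p ^ 2 - q ^ 2 ≠ 0 := by nlinarith
  have d2 : p ^ 2 - r ^ 2 ≠ 0 := by nlinarith
  have d3 : q ^ 2 - r ^ 2 ≠ 0 := by nlinarith
  have key : ∀ s t : ℝ, s ≠ 0 → t ≠ 0 →
      (1 / s) ^ 2 / ((1 / t) ^ 2 - (1 / s) ^ 2) = t ^ 2 / (s ^ 2 - t ^ 2) := by
    intro s t hs ht
    have : (1 / t) ^ 2 - (1 / s) ^ 2 = (s ^ 2 - t ^ 2) / (s ^ 2 * t ^ 2) := by field_simp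
    rw [this, div_div_eq_mul_div]
    congr 1
    field_simp
  unfold gg
  rw [eX, eY, eZ, key p q hp0.ne' hq0.ne', key p r hp0.ne' hr0.ne', key q p hq0.ne' hp0.ne',
    key q r hq0.ne' hr0.ne', key r p hr0.ne' hp0.ne', key r q hr0.ne' hq0.ne']
  rw [← neg_sub (p ^ 2) (q ^ 2), ← neg_sub (p ^ 2) (r ^ 2), ← neg_sub (q ^ 2) (r ^ 2)]
  have hS : S = ((p ^ 2) ^ (n + 2) * (q ^ 2 - r ^ 2) - (q ^ 2) ^ (n + 2) * (p ^ 2 - r ^ 2) +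
      (r ^ 2) ^ (n + 2) * (p ^ 2 - q ^ 2)) / ((p ^ 2 - q ^ 2) * (p ^ 2 - r ^ 2) * (q ^ 2 - r ^ 2)) := by
    rw [eq_div_iff (by positivity)]
    exact h
  rw [hS]
  have hpe : p ^ (2 * n + 6) = (p ^ 2) ^ (n + 2) * p ^ 2 := by ring
  have hqe : q ^ (2 * n + 6) = (q ^ 2) ^ (n + 2) * q ^ 2 := by ring
  have hre : r ^ (2 * n + 6) = (r ^ 2) ^ (n + 2) * r ^ 2 := by ring
  rw [hpe, hqe, hre]
  generalize (p ^ 2) ^ (n + 2) = P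
  generalize (q ^ 2) ^ (n + 2) = Q
  generalize (r ^ 2) ^ (n + 2) = R
  generalize p ^ 2 = a at *
  generalize q ^ 2 = b at *
  generalize r ^ 2 = c at *
  field_simp
  ring

lemma S3_sym (N : ℕ) (f : ℕ → ℝ) :
    S3 N (fun x y z => f x * (gg x y * gg x z) + f y * (gg y x * gg y z) + f z * (gg z x * gg z y))
    = ∑ k ∈ range N, f k * (∑ j ∈ range N, ∑ l ∈ range N, if l < j then gg k j * gg k l else 0) := by
  rw [S3_add, S3_add]
  have h1 : S3 N (fun x y z => f x * (gg x y * gg x z)) = ∑ k ∈ range N, ∑ j ∈ range N, ∑ l ∈ range N,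
      if l < j ∧ j < k then f k * (gg k j * gg k l) else 0 := rfl
  have h2 : S3 N (fun x y z => f y * (gg y x * gg y z)) = ∑ k ∈ range N, ∑ j ∈ range N, ∑ l ∈ range N,
      if l < k ∧ k < j then f k * (gg k j * gg k l) else 0 := by
    unfold S3
    rw [Finset.sum_comm]
  have h3 : S3 N (fun x y z => f z * (gg z x * gg z y)) = ∑ k ∈ range N, ∑ j ∈ range N, ∑ l ∈ range N,
      if k < l ∧ l < j then f k * (gg k j * gg k l) else 0 := by
    unfold S3
    rw [Finset.sum_congr rfl (fun x _ => Finset.sum_comm), Finset.sum_comm]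
  rw [h1, h2, h3, ← Finset.sum_add_distrib, ← Finset.sum_add_distrib]
  refine Finset.sum_congr rfl fun k _ => ?_
  rw [← Finset.sum_add_distrib, ← Finset.sum_add_distrib, Finset.mul_sum]
  refine Finset.sum_congr rfl fun j _ => ?_
  rw [← Finset.sum_add_distrib, ← Finset.sum_add_distrib, Finset.mul_sum]
  refine Finset.sum_congr rfl fun l _ => ?_
  by_cases hjk : j = k
  · subst hjk
    simp [gg_self]
  by_cases hlk : l = k
  · subst hlk
    simp [gg_self]
  by_cases hlj : l < j
  · rcases lt_trichotomy j k with h | h | h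
    · rw [if_pos ⟨hlj, h⟩, if_neg (by omega), if_neg (by omega), if_pos hlj]; ring
    · exact absurd h hjk
    · rcases lt_trichotomy l k with hp0 | hp0 | hp0
      · rw [if_neg (by omega), if_pos (by omega), if_neg (by omega), if_pos hlj]; ring
      · exact absurd hp0 hlk
      · rw [if_neg (by omega), if_neg (by omega), if_pos (by omega), if_pos hlj]; ring
  · rw [if_neg (by omega), if_neg (by omega), if_neg (by omega), if_neg hlj]; ring

lemma sum_pairs (N : ℕ) (f : ℕ → ℝ) :
    (∑ j ∈ range N, ∑ l ∈ range N, if l < j then f j * f l else 0) =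
      ((∑ j ∈ range N, f j) ^ 2 - ∑ j ∈ range N, f j ^ 2) / 2 := by
  have h1 : (∑ j ∈ range N, f j) ^ 2 = (∑ j ∈ range N, ∑ l ∈ range N, if l < j then f j * f l else 0)
      + (∑ j ∈ range N, ∑ l ∈ range N, if j < l then f j * f l else 0)
      + ∑ j ∈ range N, ∑ l ∈ range N, if j = l then f j * f l else 0 := by
    rw [sq, Finset.sum_mul_sum, ← Finset.sum_add_distrib, ← Finset.sum_add_distrib]
    refine Finset.sum_congr rfl fun j _ => ?_
    rw [← Finset.sum_add_distrib, ← Finset.sum_add_distrib]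
    refine Finset.sum_congr rfl fun l _ => ?_
    rcases lt_trichotomy l j with h | h | h
    · simp [h, h.not_gt, h.ne']
    · simp [h]
    · simp [h, h.not_gt, h.ne]
  have h2 : (∑ j ∈ range N, ∑ l ∈ range N, if j < l then f j * f l else 0) =
      ∑ j ∈ range N, ∑ l ∈ range N, if l < j then f j * f l else 0 := by
    rw [Finset.sum_comm]
    simp_rw [mul_comm]
  have h3 : (∑ j ∈ range N, ∑ l ∈ range N, if j = l then f j * f l else 0) = ∑ j ∈ range N, f j ^ 2 := by
    refine Finset.sum_congr rfl fun j hj => ?_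
    rw [Finset.sum_ite_eq, if_pos hj, sq]
  rw [h1, h2, h3]
  ring

/-- `1/(j-k)` with the value `0` at `j = k`. -/
noncomputable def uu (k j : ℕ) : ℝ := 1 / ((j : ℝ) - k)

lemma gg_eq (k j : ℕ) : gg k j = (((k : ℝ) + 1) / 2) * (uu k j - uu k (j + (2 * k + 2)))
    + if j = k then 1 / 4 else 0 := by
  have hk : (k : ℝ) + 1 ≠ 0 := by positivity
  unfold uu
  by_cases h : j = k
  · subst h
    rw [gg_self]
    push_cast
    simp
    rw [show 2 * (j : ℝ) + 2 = 2 * (j + 1) by ring]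
    field_simp
    norm_num
  · rw [if_neg h]
    unfold gg
    have h1 : (j : ℝ) - k ≠ 0 := by
      rw [sub_ne_zero]
      exact_mod_cast h
    have h2 : (j : ℝ) + k + 2 ≠ 0 := by positivity
    push_cast
    rw [show ((j : ℝ) + 1) ^ 2 - ((k : ℝ) + 1) ^ 2 = (j - k) * (j + k + 2) by ring,
      show (j : ℝ) + (2 * k + 2) - k = j + k + 2 by ring]
    field_simp
    ring

lemma gg_sq (k j : ℕ) : gg k j ^ 2 = (((k : ℝ) + 1) ^ 2 / 4) * (uu k j ^ 2 + uu k (j + (2 * k + 2)) ^ 2)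
    - gg k j / 2 - if j = k then 1 / 16 else 0 := by
  have hk : (k : ℝ) + 1 ≠ 0 := by positivity
  unfold uu
  by_cases h : j = k
  · subst h
    rw [gg_self]
    push_cast
    simp
    rw [show 2 * (j : ℝ) + 2 = 2 * (j + 1) by ring]
    field_simp
    norm_num
  · rw [if_neg h]
    unfold gg
    have h1 : (j : ℝ) - k ≠ 0 := by
      rw [sub_ne_zero]
      exact_mod_cast h
    have h2 : (j : ℝ) + k + 2 ≠ 0 := by positivity
    push_cast
    rw [show ((j : ℝ) + 1) ^ 2 - ((k : ℝ) + 1) ^ 2 = (j - k) * (j + k + 2) by ring,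
      show (j : ℝ) + (2 * k + 2) - k = j + k + 2 by ring]
    field_simp
    ring

lemma uu_tendsto (k : ℕ) : Tendsto (uu k) atTop (𝓝 0) := by
  have := tendsto_inv (-(k : ℝ))
  refine this.congr fun n => ?_
  rw [uu, sub_eq_add_neg]

lemma uu_shift (k r : ℕ) : uu k (k + 1 + r) = 1 / ((r : ℝ) + 1) := by
  unfold uu
  push_cast
  congr 1
  ring

lemma uu_sum (k : ℕ) : ∑ i ∈ range (2 * k + 2), uu k i = 1 / ((k : ℝ) + 1) := by
  rw [show 2 * k + 2 = (k + 1) + (k + 1) by ring, Finset.sum_range_add]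
  simp_rw [uu_shift]
  have h1 : ∑ i ∈ range (k + 1), uu k i = - H k := by
    rw [Finset.sum_range_succ, ← H_reflect, ← Finset.sum_neg_distrib]
    simp only [uu, sub_self, div_zero, add_zero]
    refine Finset.sum_congr rfl fun i _ => ?_
    rw [← neg_sub (k : ℝ) i, one_div_neg_eq_neg_one_div]
  rw [h1]
  change - H k + H (k + 1) = _
  rw [H_succ]
  ring

lemma uu_abs (k j : ℕ) : |uu k j| ≤ 1 := by
  unfold uu
  by_cases h : j = k
  · simp [h]
  · rw [abs_div, abs_one]
    have : (1 : ℝ) ≤ |(j : ℝ) - k| := by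
      have : (1 : ℤ) ≤ |(j : ℤ) - k| := Int.one_le_abs (by omega)
      exact_mod_cast this
    exact (div_le_one (by linarith)).2 this

lemma sum_gg (k N : ℕ) (hN : k < N) : ∑ j ∈ range N, gg k j =
    (((k : ℝ) + 1) / 2) * (∑ j ∈ range N, (uu k j - uu k (j + (2 * k + 2)))) + 1 / 4 := by
  simp_rw [gg_eq]
  rw [Finset.sum_add_distrib, Finset.sum_ite_eq', if_pos (by simpa using hN), Finset.mul_sum]

lemma gg_tendsto (k : ℕ) : Tendsto (fun N => ∑ j ∈ range N, gg k j) atTop (𝓝 (3 / 4)) := by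
  have h := ((telescope_tendsto (uu k) (uu_tendsto k) (2 * k + 2)).const_mul (((k : ℝ) + 1) / 2)).add_const (1 / 4)
  rw [uu_sum] at h
  have hk : (k : ℝ) + 1 ≠ 0 := by positivity
  have e : (((k : ℝ) + 1) / 2) * (1 / ((k : ℝ) + 1)) + 1 / 4 = 3 / 4 := by
    field_simp
    norm_num
  rw [e] at h
  refine h.congr' ?_
  filter_upwards [eventually_gt_atTop k] with N hN
  rw [sum_gg k N hN]

lemma gg_bound (k N : ℕ) (hN : k < N) : |∑ j ∈ range N, gg k j| ≤ 3 * ((k : ℝ) + 1) ^ 2 := by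
  rw [sum_gg k N hN, telescope]
  have h1 : |∑ i ∈ range (2 * k + 2), uu k i| ≤ 2 * k + 2 := by
    refine (Finset.abs_sum_le_sum_abs _ _).trans ?_
    refine (Finset.sum_le_sum fun i _ => uu_abs k i).trans ?_
    simp
  have h2 : |∑ i ∈ range (2 * k + 2), uu k (N + i)| ≤ 2 * k + 2 := by
    refine (Finset.abs_sum_le_sum_abs _ _).trans ?_
    refine (Finset.sum_le_sum fun i _ => uu_abs k _).trans ?_
    simp
  rw [abs_le] at *
  have hk : (0 : ℝ) ≤ k := by positivity
  constructor <;> nlinarith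

lemma Z2_tendsto : Tendsto (fun N => ∑ j ∈ range N, (1 / ((j : ℝ) + 1)) ^ 2) atTop (𝓝 (Z 2)) :=
  (summable_Z le_rfl).hasSum.tendsto_sum_nat

lemma uu2_tendsto (k : ℕ) : Tendsto (fun N => ∑ j ∈ range N, (uu k j ^ 2 + uu k (j + (2 * k + 2)) ^ 2))
    atTop (𝓝 (2 * Z 2 - 1 / ((k : ℝ) + 1) ^ 2)) := by
  have h0 : Tendsto (fun n => uu k n ^ 2) atTop (𝓝 0) := by
    simpa using (uu_tendsto k).pow 2
  have h1 := telescope_tendsto (fun n => uu k n ^ 2) h0 (k + 1)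
  have h00 : Tendsto (fun n : ℕ => (1 / ((n : ℝ) + 1)) ^ 2) atTop (𝓝 0) := by
    simpa using (tendsto_inv 1).pow 2
  have h2 := telescope_tendsto (fun n : ℕ => (1 / ((n : ℝ) + 1)) ^ 2) h00 (k + 1)
  have h3 := (h1.sub h2).add (Z2_tendsto.const_mul 2)
  have e1 : ∑ i ∈ range (k + 1), uu k i ^ 2 = ∑ i ∈ range k, (1 / ((i : ℝ) + 1)) ^ 2 := by
    rw [Finset.sum_range_succ, ← Finset.sum_range_reflect]
    simp only [uu, sub_self, div_zero]
    rw [zero_pow two_ne_zero, add_zero]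
    refine Finset.sum_congr rfl fun i hi => ?_
    have hi := Finset.mem_range.1 hi
    rw [Nat.sub_sub, Nat.cast_sub (by omega)]
    push_cast
    rw [show (k : ℝ) - (1 + i) - k = -(i + 1) by ring, one_div_neg_eq_neg_one_div, neg_sq]
  rw [e1, Finset.sum_range_succ] at h3
  have e2 : ∑ i ∈ range k, (1 / ((i : ℝ) + 1)) ^ 2 - (∑ i ∈ range k, (1 / ((i : ℝ) + 1)) ^ 2 + (1 / ((k : ℝ) + 1)) ^ 2)
      + 2 * Z 2 = 2 * Z 2 - 1 / ((k : ℝ) + 1) ^ 2 := by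
    rw [one_div_pow]
    ring
  rw [e2] at h3
  refine h3.congr fun N => ?_
  rw [Finset.mul_sum, ← Finset.sum_sub_distrib, ← Finset.sum_add_distrib]
  refine Finset.sum_congr rfl fun j _ => ?_
  rw [show j + (k + 1) = k + 1 + j by ring, uu_shift,
    show j + (2 * k + 2) = k + 1 + (j + (k + 1)) by ring, uu_shift]
  ring

lemma gg2_tendsto (k : ℕ) : Tendsto (fun N => ∑ j ∈ range N, gg k j ^ 2) atTop
    (𝓝 (((k : ℝ) + 1) ^ 2 * Z 2 / 2 - 11 / 16)) := by
  have h := (((uu2_tendsto k).const_mul (((k : ℝ) + 1) ^ 2 / 4)).sub ((gg_tendsto k).div_const 2)).sub_const (1 / 16)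
  have e : (((k : ℝ) + 1) ^ 2 / 4) * (2 * Z 2 - 1 / ((k : ℝ) + 1) ^ 2) - (3 / 4) / 2 - 1 / 16 =
      ((k : ℝ) + 1) ^ 2 * Z 2 / 2 - 11 / 16 := by
    have hk : (k : ℝ) + 1 ≠ 0 := by positivity
    field_simp
    ring
  rw [e] at h
  refine h.congr' ?_
  filter_upwards [eventually_gt_atTop k] with N hN
  simp_rw [gg_sq]
  rw [Finset.sum_sub_distrib, Finset.sum_sub_distrib, Finset.sum_ite_eq', if_pos (by simpa using hN),
    Finset.mul_sum, Finset.sum_div]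

lemma gg2_bound (k N : ℕ) : ∑ j ∈ range N, gg k j ^ 2 ≤ ((k : ℝ) + 1) ^ 2 * Z 2 / 2 := by
  have hm : Monotone (fun N => ∑ j ∈ range N, gg k j ^ 2) := by
    intro a b hab
    exact Finset.sum_le_sum_of_subset_of_nonneg (Finset.range_mono hab) (fun _ _ _ => sq_nonneg _)
  have := hm.ge_of_tendsto (gg2_tendsto k) N
  linarith

lemma Z_nonneg (s : ℕ) : 0 ≤ Z s := tsum_nonneg fun k => by positivity

lemma even_tendsto (n : ℕ) :
    Tendsto (fun N => S3 N (fun x y z => (1 / ((x : ℝ) + 1)) ^ 2 * (1 / ((y : ℝ) + 1)) ^ 2 * (1 / ((z : ℝ) + 1)) ^ 2 *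
      ∑ i ∈ range (n + 1), ∑ j ∈ range (n - i + 1),
        ((1 / ((x : ℝ) + 1)) ^ 2) ^ i * ((1 / ((y : ℝ) + 1)) ^ 2) ^ j * ((1 / ((z : ℝ) + 1)) ^ 2) ^ (n - i - j)))
      atTop (𝓝 (5 / 8 * Z (2 * n + 6) - 1 / 4 * (Z 2 * Z (2 * n + 4)))) := by
  have key : ∀ N, S3 N (fun x y z => (1 / ((x : ℝ) + 1)) ^ 2 * (1 / ((y : ℝ) + 1)) ^ 2 * (1 / ((z : ℝ) + 1)) ^ 2 *
      ∑ i ∈ range (n + 1), ∑ j ∈ range (n - i + 1),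
        ((1 / ((x : ℝ) + 1)) ^ 2) ^ i * ((1 / ((y : ℝ) + 1)) ^ 2) ^ j * ((1 / ((z : ℝ) + 1)) ^ 2) ^ (n - i - j)) =
      ∑ k ∈ range N, (1 / ((k : ℝ) + 1)) ^ (2 * n + 6) *
        (((∑ j ∈ range N, gg k j) ^ 2 - ∑ j ∈ range N, gg k j ^ 2) / 2) := by
    intro N
    simp_rw [← sum_pairs]
    rw [← S3_sym N (fun k => (1 / ((k : ℝ) + 1)) ^ (2 * n + 6))]
    exact S3_congr _ _ _ fun x y z hzy hyx => pt_even n x y z hzy hyx _ _ _ rfl rfl rfl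
  simp_rw [key]
  have hlim : 5 / 8 * Z (2 * n + 6) - 1 / 4 * (Z 2 * Z (2 * n + 4)) =
      ∑' k : ℕ, (5 / 8 * (1 / ((k : ℝ) + 1)) ^ (2 * n + 6) - (1 / 4 * Z 2) * (1 / ((k : ℝ) + 1)) ^ (2 * n + 4)) := by
    rw [Summable.tsum_sub, tsum_mul_left, tsum_mul_left]
    · simp only [Z]
      ring
    · exact (summable_Z (by omega)).mul_left _
    · exact (summable_Z (by omega)).mul_left _
  rw [hlim]
  refine dom_tendsto _ _ (fun k => (9 + Z 2) * (1 / ((k : ℝ) + 1)) ^ 2)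
    ((summable_Z le_rfl).mul_left _) ?_ ?_
  · intro N k hk
    have h1 := gg_bound k N hk
    have h2 := gg2_bound k N
    have h3 : 0 ≤ ∑ j ∈ range N, gg k j ^ 2 := Finset.sum_nonneg fun _ _ => sq_nonneg _
    generalize ∑ j ∈ range N, gg k j ^ 2 = T at *
    generalize ∑ j ∈ range N, gg k j = S at *
    have hK : (1 : ℝ) ≤ (k : ℝ) + 1 := by linarith [(Nat.cast_nonneg k : (0:ℝ) ≤ k)]
    generalize (k : ℝ) + 1 = K at *
    have hz := Z_nonneg 2
    have hS : S ^ 2 ≤ 9 * K ^ 4 := by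
      have := sq_le_sq' (abs_le.1 h1).1 (abs_le.1 h1).2
      nlinarith
    have hT : T ≤ Z 2 * K ^ 4 := by
      have : K ^ 2 ≤ K ^ 4 := pow_le_pow_right₀ hK (by norm_num)
      nlinarith [sq_nonneg K]
    have hST : |(S ^ 2 - T) / 2| ≤ (9 + Z 2) * K ^ 4 := by
      rw [abs_le]
      have : 0 ≤ K ^ 4 := by positivity
      constructor <;> nlinarith [sq_nonneg S]
    rw [abs_mul, abs_of_nonneg (by positivity)]
    have hp1 : 1 / K ≤ 1 := by rw [div_le_one (by linarith)]; exact hK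
    have hp0 : 0 ≤ 1 / K := by positivity
    calc (1 / K) ^ (2 * n + 6) * |(S ^ 2 - T) / 2| ≤ (1 / K) ^ 6 * ((9 + Z 2) * K ^ 4) := by
          refine mul_le_mul (pow_le_pow_of_le_one hp0 hp1 (by omega)) hST (abs_nonneg _) (by positivity)
      _ = _ := by field_simp
  · intro k
    have h := (((gg_tendsto k).pow 2).sub (gg2_tendsto k)).div_const 2 |>.const_mul ((1 / ((k : ℝ) + 1)) ^ (2 * n + 6))
    have e : (1 / ((k : ℝ) + 1)) ^ (2 * n + 6) * (((3 / 4) ^ 2 - (((k : ℝ) + 1) ^ 2 * Z 2 / 2 - 11 / 16)) / 2) =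
        5 / 8 * (1 / ((k : ℝ) + 1)) ^ (2 * n + 6) - (1 / 4 * Z 2) * (1 / ((k : ℝ) + 1)) ^ (2 * n + 4) := by
      have hk : (1 / ((k : ℝ) + 1)) * ((k : ℝ) + 1) = 1 := by
        have hk : (k : ℝ) + 1 ≠ 0 := by positivity
        field_simp
      have ep0 : (1 / ((k : ℝ) + 1)) ^ (2 * n + 6) * ((k : ℝ) + 1) ^ 2 = (1 / ((k : ℝ) + 1)) ^ (2 * n + 4) := by
        rw [pow_add _ (2 * n + 4) 2, mul_assoc, ← mul_pow, hk]
        simp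
      linear_combination (- Z 2 / 4) * ep0
    rw [e] at h
    exact h

/-- The index set of the sum. -/
def II (w : ℕ) : Finset ((_ : ℕ) × ℕ) := (Icc 2 (w - 2)).sigma (fun a => Icc 1 (w - a - 1))

lemma all_sum (w : ℕ) (hw : 4 ≤ w) :
    ∑ i ∈ II w, mzv ![i.1, i.2, w - i.1 - i.2] = Z w := by
  simp_rw [mzv_three]
  refine sum_tsum_of_S3 (II w) (fun i x y z => (1 / ((x : ℝ) + 1)) ^ i.1 * (1 / ((y : ℝ) + 1)) ^ i.2 *
    (1 / ((z : ℝ) + 1)) ^ (w - i.1 - i.2)) (fun i x y z => by positivity) _ ?_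
  have h := sum_formula_tendsto (w - 4)
  rw [show w - 4 + 4 = w by omega] at h
  refine h.congr fun N => S3_congr _ _ _ fun x y z _ _ => ?_
  rw [← pt_all w hw, II, Finset.sum_sigma]

lemma even_pt (n : ℕ) (p q r : ℝ) :
    (∑ i ∈ (II (2 * n + 6)).filter (fun i => Even i.1 ∧ Even i.2),
      p ^ i.1 * q ^ i.2 * r ^ (2 * n + 6 - i.1 - i.2)) =
    p ^ 2 * q ^ 2 * r ^ 2 * ∑ i ∈ range (n + 1), ∑ j ∈ range (n - i + 1),
        (p ^ 2) ^ i * (q ^ 2) ^ j * (r ^ 2) ^ (n - i - j) := by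
  rw [Finset.sum_sigma', Finset.mul_sum]
  refine Finset.sum_bij' (fun i _ => ⟨i.1 / 2 - 1, i.2 / 2 - 1⟩) (fun i _ => ⟨2 * i.1 + 2, 2 * i.2 + 2⟩)
    ?_ ?_ ?_ ?_ ?_
  · rintro ⟨a, b⟩ h
    simp only [II, mem_filter, mem_sigma, mem_Icc, mem_range, Nat.even_iff] at h ⊢
    omega
  · rintro ⟨a, b⟩ h
    simp only [II, mem_filter, mem_sigma, mem_Icc, mem_range, Nat.even_iff] at h ⊢
    omega
  · rintro ⟨a, b⟩ h
    simp only [II, mem_filter, mem_sigma, mem_Icc, Nat.even_iff] at h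
    have e1 : 2 * (a / 2 - 1) + 2 = a := by omega
    have e2 : 2 * (b / 2 - 1) + 2 = b := by omega
    simp only [e1, e2]
  · rintro ⟨a, b⟩ h
    have e1 : (2 * a + 2) / 2 - 1 = a := by omega
    have e2 : (2 * b + 2) / 2 - 1 = b := by omega
    simp only [e1, e2]
  · rintro ⟨a, b⟩ h
    simp only [II, mem_filter, mem_sigma, mem_Icc, Nat.even_iff] at h
    obtain ⟨a, rfl⟩ : ∃ ap0, a = 2 * ap0 + 2 := ⟨a / 2 - 1, by omega⟩
    obtain ⟨b, rfl⟩ : ∃ bp0, b = 2 * bp0 + 2 := ⟨b / 2 - 1, by omega⟩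
    have e1 : (2 * a + 2) / 2 - 1 = a := by omega
    have e2 : (2 * b + 2) / 2 - 1 = b := by omega
    simp only [e1, e2]
    rw [show 2 * n + 6 - (2 * a + 2) - (2 * b + 2) = 2 * (n - a - b) + 2 by omega]
    ring

lemma even_sum (n : ℕ) :
    ∑ i ∈ (II (2 * n + 6)).filter (fun i => Even i.1 ∧ Even i.2), mzv ![i.1, i.2, 2 * n + 6 - i.1 - i.2] =
      5 / 8 * Z (2 * n + 6) - 1 / 4 * (Z 2 * Z (2 * n + 4)) := by
  simp_rw [mzv_three]
  refine sum_tsum_of_S3 _ (fun (i : (_ : ℕ) × ℕ) x y z => (1 / ((x : ℝ) + 1)) ^ i.1 * (1 / ((y : ℝ) + 1)) ^ i.2 *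
    (1 / ((z : ℝ) + 1)) ^ (2 * n + 6 - i.1 - i.2)) (fun i x y z => by positivity) _ ?_
  refine (even_tendsto n).congr fun N => S3_congr _ _ _ fun x y z _ _ => ?_
  rw [even_pt]

lemma Z_of_hasSum (s : ℕ) (hs : s ≠ 0) (L : ℝ) (h : HasSum (fun n : ℕ => 1 / (n : ℝ) ^ s) L) : Z s = L := by
  have h1 := h.tsum_eq
  rw [h.summable.tsum_eq_zero_add] at h1
  rw [← h1, Z]
  simp [hs]

lemma even_sum_four : 0 = 5 / 8 * Z 4 - 1 / 4 * (Z 2 * Z 2) := by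
  rw [Z_of_hasSum 4 (by norm_num) _ hasSum_zeta_four, Z_of_hasSum 2 (by norm_num) _ hasSum_zeta_two]
  ring

lemma even_sum' (w : ℕ) (hw : 4 ≤ w) (hew : Even w) :
    ∑ i ∈ (II w).filter (fun i => Even i.1 ∧ Even i.2), mzv ![i.1, i.2, w - i.1 - i.2] =
      5 / 8 * Z w - 1 / 4 * (Z 2 * Z (w - 2)) := by
  rw [Nat.even_iff] at hew
  rcases Nat.lt_or_ge w 6 with h | h
  · obtain rfl : w = 4 := by omega
    rw [← even_sum_four]
    refine Finset.sum_eq_zero ?_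
    rintro ⟨a, b⟩ h
    simp only [II, mem_filter, mem_sigma, mem_Icc, Nat.even_iff] at h
    omega
  · obtain ⟨n, rfl⟩ : ∃ n, w = 2 * n + 6 := ⟨w / 2 - 3, by omega⟩
    exact even_sum n

end WSum

theorem weighted_sum_depth3_alt (w : ℕ) (hw : 4 ≤ w) (hew : Even w) :
    (∑ a ∈ Finset.Icc 2 (w - 2), ∑ b ∈ Finset.Icc 1 (w - a - 1),
        ((-1 : ℝ) ^ a + (-1 : ℝ) ^ b + (-1 : ℝ) ^ (w - a - b)) * mzv ![a, b, w - a - b])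
    = (3 / 2) * mzv ![w] - mzv ![2] * mzv ![w - 2] := by
  have h1 := WSum.all_sum w hw
  have h2 := WSum.even_sum' w hw hew
  rw [WSum.mzv_one, WSum.mzv_one, WSum.mzv_one, Finset.sum_sigma']
  have h3 : (∑ i ∈ WSum.II w, ((-1 : ℝ) ^ i.1 + (-1 : ℝ) ^ i.2 + (-1 : ℝ) ^ (w - i.1 - i.2)) *
      mzv ![i.1, i.2, w - i.1 - i.2]) =
      4 * (∑ i ∈ (WSum.II w).filter (fun i => Even i.1 ∧ Even i.2), mzv ![i.1, i.2, w - i.1 - i.2])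
      - ∑ i ∈ WSum.II w, mzv ![i.1, i.2, w - i.1 - i.2] := by
    rw [Finset.sum_filter, Finset.mul_sum, ← Finset.sum_sub_distrib]
    refine Finset.sum_congr rfl ?_
    rintro ⟨a, b⟩ hab
    simp only [WSum.II, Finset.mem_sigma, Finset.mem_Icc] at hab
    dsimp only
    have hc : Even (w - a - b) ↔ (Even a ↔ Even b) := by
      simp only [Nat.even_iff] at *
      omega
    rcases Nat.even_or_odd a with ha | ha <;> rcases Nat.even_or_odd b with hb | hb
    · have hc' := hc.2 (by simp [ha, hb])
      rw [ha.neg_one_pow, hb.neg_one_pow, hc'.neg_one_pow, if_pos ⟨ha, hb⟩]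
      ring
    · have hb' := Nat.not_even_iff_odd.2 hb
      have hc' : Odd (w - a - b) := by
        rw [← Nat.not_even_iff_odd, hc]
        simp [ha, hb']
      rw [ha.neg_one_pow, hb.neg_one_pow, hc'.neg_one_pow, if_neg (by simp [hb'])]
      ring
    · have ha' := Nat.not_even_iff_odd.2 ha
      have hc' : Odd (w - a - b) := by
        rw [← Nat.not_even_iff_odd, hc]
        simp [hb, ha']
      rw [ha.neg_one_pow, hb.neg_one_pow, hc'.neg_one_pow, if_neg (by simp [ha'])]
      ring
    · have ha' := Nat.not_even_iff_odd.2 ha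
      have hb' := Nat.not_even_iff_odd.2 hb
      have hc' := hc.2 (by simp [ha', hb'])
      rw [ha.neg_one_pow, hb.neg_one_pow, hc'.neg_one_pow, if_neg (by simp [ha'])]
      ring
  refine Eq.trans h3 ?_
  rw [h1, h2]
  ring
end
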